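/- Proposition A.1, achievability part (optimal source-channel code for the cooperative relay broadcast channel): A source S1 can be reliably transmitted over the discrete memoryless cooperative relay broadcast channel with relay side information W3 and receiver side information W if there exists a joint input pmf p(x1, x3), taken independent of the source (i.e., the single-letter joint law is p(s1, w3, w) · p(x1, x3) · p(y3, y | x1, x3)), such that H(S1 | W3) < I(X1; Y3 | X3) and H(S1 | W) < I(X1, X3; Y). -/

import Mathlib

open scoped BigOperators

/-- A probability mass function on a finite type. -/
def IsPmf {α : Type*} [Fintype α] (p : α → ℝ) : Prop :=
  (∀ a, 0 ≤ p a) ∧ ∑ a, p a = 1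

/-- Shannon entropy (natural logarithm) of the push-forward of `μ` under `X`. -/
noncomputable def entropyOf {Ω α : Type*} [Fintype Ω] [Fintype α] [DecidableEq α]
    (μ : Ω → ℝ) (X : Ω → α) : ℝ :=
  ∑ a : α, Real.negMulLog (∑ ω : Ω, if X ω = a then μ ω else 0)

/-- Conditional Shannon entropy `H(X | Y)` under `μ`. -/
noncomputable def condEntropyOf {Ω α β : Type*} [Fintype Ω] [Fintype α] [Fintype β]
    [DecidableEq α] [DecidableEq β] (μ : Ω → ℝ) (X : Ω → α) (Y : Ω → β) : ℝ :=
  entropyOf μ (fun ω => (X ω, Y ω)) - entropyOf μ Y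

/-- Mutual information `I(X ; Y)` under `μ`. -/
noncomputable def mutualInfoOf {Ω α β : Type*} [Fintype Ω] [Fintype α] [Fintype β]
    [DecidableEq α] [DecidableEq β] (μ : Ω → ℝ) (X : Ω → α) (Y : Ω → β) : ℝ :=
  entropyOf μ X + entropyOf μ Y - entropyOf μ (fun ω => (X ω, Y ω))

/-- Conditional mutual information `I(X ; Y | Z)` under `μ`. -/
noncomputable def condMutualInfoOf {Ω α β γ : Type*} [Fintype Ω] [Fintype α] [Fintype β]
    [Fintype γ] [DecidableEq α] [DecidableEq β] [DecidableEq γ]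
    (μ : Ω → ℝ) (X : Ω → α) (Y : Ω → β) (Z : Ω → γ) : ℝ :=
  entropyOf μ (fun ω => (X ω, Z ω)) + entropyOf μ (fun ω => (Y ω, Z ω))
    - entropyOf μ (fun ω => (X ω, Y ω, Z ω)) - entropyOf μ Z

/-- Causality of the relay encoding functions: the channel input of the relay at time `k`
depends on the relay channel outputs only through those at times `j < k`. -/
def CausalRelay {n : ℕ} {Y3 W3 X3 : Type*}
    (f3 : Fin n → (Fin n → Y3) → (Fin n → W3) → X3) : Prop :=
  ∀ (k : Fin n) (y y' : Fin n → Y3) (w : Fin n → W3),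
    (∀ j : Fin n, j < k → y j = y' j) → f3 k y w = f3 k y' w

/-- Error probability of a blocklength-`n` source-channel code over the discrete memoryless
cooperative relay broadcast channel (CRBC): both the relay decoder `g3` and the
destination decoder `g` must recover the source block. -/
noncomputable def crbcErrProb {S1 W W3 X1 X3 Y Y3 : Type*}
    [Fintype S1] [Fintype W] [Fintype W3] [Fintype Y] [Fintype Y3] [DecidableEq S1]
    (pSrc : S1 × W × W3 → ℝ) (Q : X1 × X3 → Y × Y3 → ℝ) (n : ℕ)
    (f1 : (Fin n → S1) → Fin n → X1)
    (f3 : Fin n → (Fin n → Y3) → (Fin n → W3) → X3)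
    (g3 : (Fin n → Y3) → (Fin n → W3) → Fin n → S1)
    (g : (Fin n → Y) → (Fin n → W) → Fin n → S1) : ℝ :=
  ∑ s1 : Fin n → S1, ∑ w : Fin n → W, ∑ w3 : Fin n → W3,
    ∑ y : Fin n → Y, ∑ y3 : Fin n → Y3,
      if g y w ≠ s1 ∨ g3 y3 w3 ≠ s1 then
        (∏ k : Fin n, pSrc (s1 k, w k, w3 k)) *
          ∏ k : Fin n, Q (f1 s1 k, f3 k y3 w3) (y k, y3 k)
      else 0

/-- The source `S1` can be reliably transmitted over the DM CRBC: codes with arbitrarily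
small error probability exist. -/
def CrbcReliablyTransmitted {S1 W W3 X1 X3 Y Y3 : Type*}
    [Fintype S1] [Fintype W] [Fintype W3] [Fintype Y] [Fintype Y3] [DecidableEq S1]
    (pSrc : S1 × W × W3 → ℝ) (Q : X1 × X3 → Y × Y3 → ℝ) : Prop :=
  ∀ ε : ℝ, 0 < ε → ∃ n : ℕ, 0 < n ∧
    ∃ (f1 : (Fin n → S1) → Fin n → X1)
      (f3 : Fin n → (Fin n → Y3) → (Fin n → W3) → X3)
      (g3 : (Fin n → Y3) → (Fin n → W3) → Fin n → S1)
      (g : (Fin n → Y) → (Fin n → W) → Fin n → S1),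
      CausalRelay f3 ∧ crbcErrProb pSrc Q n f1 f3 g3 g ≤ ε

/-- The single-letter joint distribution `p(s1,w3,w) p(x1,x3) p(y3,y|x1,x3)`, with channel
inputs independent of the source. -/
noncomputable def crbcSepJoint {S1 W W3 X1 X3 Y Y3 : Type*}
    (pSrc : S1 × W × W3 → ℝ) (Q : X1 × X3 → Y × Y3 → ℝ) (pX : X1 × X3 → ℝ) :
    S1 × W3 × W × X1 × X3 × Y3 × Y → ℝ :=
  fun (s1, w3, w, x1, x3, y3, y) => pSrc (s1, w, w3) * pX (x1, x3) * Q (x1, x3) (y, y3)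

theorem IsPmf.marginal_fst {α β : Type*} [Fintype α] [Fintype β] {q : α × β → ℝ}
    (hq : IsPmf q) : IsPmf fun a => ∑ b, q (a, b) :=
  ⟨fun _ => Finset.sum_nonneg fun _ _ => hq.1 _, by rw [← Fintype.sum_prod_type, hq.2]⟩

theorem IsPmf.marginal_snd {α β : Type*} [Fintype α] [Fintype β] {q : α × β → ℝ}
    (hq : IsPmf q) : IsPmf fun b => ∑ a, q (a, b) :=
  ⟨fun _ => Finset.sum_nonneg fun _ _ => hq.1 _, by
    rw [Finset.sum_comm, ← Fintype.sum_prod_type, hq.2]⟩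

section ProductSums

variable {ι A : Type*} [Fintype ι] [DecidableEq ι] [Fintype A]

theorem sum_pi_prod (f : ι → A → ℝ) :
    ∑ z : ι → A, ∏ i, f i (z i) = ∏ i, ∑ a, f i a :=
  (Fintype.prod_sum f).symm

theorem sum_pi_prod_eq_one {p : ι → A → ℝ} (hp : ∀ i, ∑ a, p i a = 1) :
    ∑ z : ι → A, ∏ i, p i (z i) = 1 := by
  rw [sum_pi_prod]; simp [hp]

theorem isPmf_pi {p : ι → A → ℝ} (hp : ∀ i, IsPmf (p i)) :
    IsPmf fun z : ι → A => ∏ i, p i (z i) :=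
  ⟨fun _ => Finset.prod_nonneg fun i _ => (hp i).1 _, sum_pi_prod_eq_one fun i => (hp i).2⟩

/-- Redrawing one coordinate of a family of independent variables does not change
expectations. -/
theorem sum_pi_resample (p : ι → A → ℝ) (i : ι) (hp : ∑ a, p i a = 1) (F : (ι → A) → ℝ) :
    ∑ z : ι → A, (∏ j, p j (z j)) * F z =
      ∑ z : ι → A, (∏ j, p j (z j)) * ∑ a, p i a * F (Function.update z i a) := by
  have hinv : Function.Involutive
      (fun x : (ι → A) × A => (Function.update x.1 i x.2, x.1 i)) := by
    rintro ⟨z, a⟩; simp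
  have key : ∀ x : (ι → A) × A,
      (∏ j, p j (x.1 j)) * (p i x.2 * F (Function.update x.1 i x.2)) =
      (∏ j, p j (Function.update x.1 i x.2 j)) * (p i (x.1 i) * F (Function.update x.1 i x.2)) := by
    rintro ⟨z, a⟩
    have h1 := Fintype.prod_eq_mul_prod_compl i (fun j => p j (z j))
    have h2 := Fintype.prod_eq_mul_prod_compl i (fun j => p j (Function.update z i a j))
    have h3 : ∏ j ∈ {i}ᶜ, p j (Function.update z i a j) = ∏ j ∈ {i}ᶜ, p j (z j) := by
      refine Finset.prod_congr rfl fun j hj => ?_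
      rw [Function.update_of_ne (by simpa using hj)]
    simp only [h1, h2, h3, Function.update_self]
    ring
  symm
  calc ∑ z : ι → A, (∏ j, p j (z j)) * ∑ a, p i a * F (Function.update z i a)
      = ∑ x : (ι → A) × A,
          (∏ j, p j (x.1 j)) * (p i x.2 * F (Function.update x.1 i x.2)) := by
        rw [Fintype.sum_prod_type]
        simp only [Finset.mul_sum]
    _ = ∑ x : (ι → A) × A, (∏ j, p j (x.1 j)) * (p i x.2 * F x.1) := by
        rw [Finset.sum_congr rfl fun x _ => key x]
        exact Equiv.sum_comp (hinv.toPerm)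
          (fun x : (ι → A) × A => (∏ j, p j (x.1 j)) * (p i x.2 * F x.1))
    _ = ∑ z : ι → A, (∏ j, p j (z j)) * F z := by
        rw [Fintype.sum_prod_type]
        simp only [← Finset.mul_sum, ← Finset.sum_mul, hp, one_mul]

theorem sum_pi_marginal {p : ι → A → ℝ} (hp : ∀ i, ∑ a, p i a = 1) (i : ι) (F : A → ℝ) :
    ∑ z : ι → A, (∏ j, p j (z j)) * F (z i) = ∑ a, p i a * F a := by
  rw [sum_pi_resample p i (hp i) fun z => F (z i)]
  simp only [Function.update_self, ← Finset.sum_mul, sum_pi_prod_eq_one hp, one_mul]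

theorem sum_pi_prod₂ {κ : Type*} [Fintype κ] (f : ι → A → κ → ℝ) :
    ∑ z : ι → A, ∑ t : ι → κ, ∏ i, f i (z i) (t i) = ∏ i, ∑ a, ∑ b, f i a b := by
  rw [← sum_pi_prod fun i a => ∑ b, f i a b]
  refine Finset.sum_congr rfl fun z _ => ?_
  exact sum_pi_prod fun i b => f i (z i) b

theorem exists_le_of_sum_pmf_mul_le {p F : A → ℝ} (hp : IsPmf p) {ε : ℝ}
    (h : ∑ a, p a * F a ≤ ε) : ∃ a, F a ≤ ε := by
  by_contra! hc
  obtain ⟨a, ha⟩ : ∃ a, p a ≠ 0 := by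
    by_contra! h0
    have := hp.2
    simp [h0] at this
  have : ∑ a, p a * ε < ∑ a, p a * F a :=
    Finset.sum_lt_sum (fun i _ => mul_le_mul_of_nonneg_left (hc i).le (hp.1 i))
      ⟨a, Finset.mem_univ _, mul_lt_mul_of_pos_left (hc a) (lt_of_le_of_ne (hp.1 a) ha.symm)⟩
  rw [← Finset.sum_mul, hp.2, one_mul] at this
  linarith

end ProductSums

section RandomCoding

/-- Some message whose score exceeds the threshold `θ`, if there is one. -/
noncomputable def thresholdDecode {M : Type*} [Nonempty M] (score : M → ℝ) (θ : ℝ) : M :=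
  open Classical in if h : ∃ s, θ < score s then h.choose else Classical.arbitrary M

theorem le_or_exists_of_thresholdDecode_ne {M : Type*} [Nonempty M] {score : M → ℝ} {θ : ℝ}
    {s : M} (h : thresholdDecode score θ ≠ s) : score s ≤ θ ∨ ∃ s', s' ≠ s ∧ θ < score s' := by
  by_cases hs : ∃ s, θ < score s
  · right
    rw [thresholdDecode, dif_pos hs] at h
    exact ⟨_, h, hs.choose_spec⟩
  · left
    exact not_lt.1 fun h' => hs ⟨s, h'⟩

variable {M A Z U : Type*} [Fintype M] [Fintype A] [Fintype Z] [Fintype U]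
  [Nonempty M] [DecidableEq M]

theorem random_coding_threshold {q : A → ℝ} (hq : IsPmf q) {V : A → Z → ℝ}
    (hV : ∀ a, IsPmf (V a)) {T : Z → ℝ} (hT : ∀ z, T z = ∑ a, q a * V a z)
    {P : M → U → ℝ} (hP0 : ∀ s u, 0 ≤ P s u) (hP1 : ∑ s, ∑ u, P s u = 1)
    {R : U → ℝ} (hR : ∀ u, R u = ∑ s, P s u) {τ : ℝ} (hτ : 0 < τ) :
    ∑ c : M → A, (∏ s, q (c s)) * ∑ s, ∑ u, ∑ z,
      (if thresholdDecode (fun s => P s u * V (c s) z) (τ * (T z * R u)) ≠ s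
        then P s u * V (c s) z else 0) ≤
    (∑ s, ∑ u, ∑ z, ∑ a, q a *
      (if P s u * V a z ≤ τ * (T z * R u) then P s u * V a z else 0)) + 1 / τ := by
  have hT0 : ∀ z, 0 ≤ T z := fun z => by
    rw [hT]; exact Finset.sum_nonneg fun a _ => mul_nonneg (hq.1 a) ((hV a).1 z)
  have hR0 : ∀ u, 0 ≤ R u := fun u => by
    rw [hR]; exact Finset.sum_nonneg fun s _ => hP0 s u
  have hqq : ∀ _ : M, ∑ a, q a = 1 := fun _ => hq.2
  have hc0 : ∀ c : M → A, 0 ≤ ∏ s, q (c s) := fun c => Finset.prod_nonneg fun s _ => hq.1 _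
  have pt : ∀ (c : M → A) s u z,
      (if thresholdDecode (fun s => P s u * V (c s) z) (τ * (T z * R u)) ≠ s
        then P s u * V (c s) z else 0) ≤
      (if P s u * V (c s) z ≤ τ * (T z * R u) then P s u * V (c s) z else 0) +
      ∑ s', if s' ≠ s then P s u * (V (c s) z *
        (if τ * (T z * R u) < P s' u * V (c s') z then 1 else 0)) else 0 := by
    intro c s u z
    have hn : 0 ≤ P s u * V (c s) z := mul_nonneg (hP0 s u) ((hV _).1 z)
    have hn' : ∀ s' ∈ Finset.univ, 0 ≤ (if s' ≠ s then P s u * (V (c s) z *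
        (if τ * (T z * R u) < P s' u * V (c s') z then (1 : ℝ) else 0)) else 0) := by
      intro s' _
      split_ifs <;> simp [hn]
    have hn1 : 0 ≤
        (if P s u * V (c s) z ≤ τ * (T z * R u) then P s u * V (c s) z else 0) := by
      split_ifs <;> simp [hn]
    split_ifs with h1 h2 h2
    · linarith [Finset.sum_nonneg hn']
    · rcases le_or_exists_of_thresholdDecode_ne h1 with h3 | ⟨s', hs', h3⟩
      · exact absurd h3 h2
      · have := Finset.single_le_sum hn' (Finset.mem_univ s')
        simp only [hs', h3, if_true, ne_eq, not_false_eq_true, mul_one] at this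
        simp only [ne_eq] at this ⊢
        linarith
    · exact add_nonneg hn (Finset.sum_nonneg hn')
    · exact add_nonneg le_rfl (Finset.sum_nonneg hn')
  have hI : ∑ c : M → A, (∏ s, q (c s)) * ∑ s, ∑ u, ∑ z,
      (if P s u * V (c s) z ≤ τ * (T z * R u) then P s u * V (c s) z else 0) =
      ∑ s, ∑ u, ∑ z, ∑ a, q a *
      (if P s u * V a z ≤ τ * (T z * R u) then P s u * V a z else 0) := by
    simp only [Finset.mul_sum]
    rw [Finset.sum_comm]; refine Finset.sum_congr rfl fun s _ => ?_
    rw [Finset.sum_comm]; refine Finset.sum_congr rfl fun u _ => ?_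
    rw [Finset.sum_comm]; refine Finset.sum_congr rfl fun z _ => ?_
    exact sum_pi_marginal hqq s
      fun a => if P s u * V a z ≤ τ * (T z * R u) then P s u * V a z else 0
  have hII : ∑ c : M → A, (∏ s, q (c s)) * ∑ s, ∑ u, ∑ z,
      (∑ s', if s' ≠ s then P s u * (V (c s) z *
        (if τ * (T z * R u) < P s' u * V (c s') z then (1 : ℝ) else 0)) else 0) ≤ 1 / τ := by
    calc _ = ∑ s, ∑ u, ∑ z, ∑ s', if s' ≠ s then P s u * (∑ c : M → A, (∏ s, q (c s)) *
            (V (c s) z * (if τ * (T z * R u) < P s' u * V (c s') z then (1 : ℝ) else 0)))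
            else 0 := by
          simp only [Finset.mul_sum]
          rw [Finset.sum_comm]; refine Finset.sum_congr rfl fun s _ => ?_
          rw [Finset.sum_comm]; refine Finset.sum_congr rfl fun u _ => ?_
          rw [Finset.sum_comm]; refine Finset.sum_congr rfl fun z _ => ?_
          rw [Finset.sum_comm]; refine Finset.sum_congr rfl fun s' _ => ?_
          split_ifs
          · refine Finset.sum_congr rfl fun c _ => ?_
            ring
          · simp
      _ = ∑ s, ∑ u, ∑ z, ∑ s', if s' ≠ s then P s u * (T z * ∑ a, q a *
            (if τ * (T z * R u) < P s' u * V a z then (1 : ℝ) else 0))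
            else 0 := by
          refine Finset.sum_congr rfl fun s _ => Finset.sum_congr rfl fun u _ =>
            Finset.sum_congr rfl fun z _ => Finset.sum_congr rfl fun s' _ => ?_
          split_ifs with hs
          · rw [sum_pi_resample (fun _ => q) s (hqq s)]
            simp only [Function.update_self, Function.update_of_ne hs, ← mul_assoc,
              ← Finset.sum_mul, ← hT]
            simp only [mul_assoc]
            rw [← sum_pi_marginal hqq s'
              (fun a => if τ * (T z * R u) < P s' u * V a z then (1 : ℝ) else 0)]
            congr 1
            rw [Finset.mul_sum]
            refine Finset.sum_congr rfl fun c _ => ?_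
            ring
          · rfl
      _ ≤ ∑ s, ∑ u, ∑ z, ∑ s', P s u * (T z * ∑ a, q a *
            (if τ * (T z * R u) < P s' u * V a z then (1 : ℝ) else 0)) := by
          refine Finset.sum_le_sum fun s _ => Finset.sum_le_sum fun u _ =>
            Finset.sum_le_sum fun z _ => Finset.sum_le_sum fun s' _ => ?_
          split_ifs
          · exact le_rfl
          · refine mul_nonneg (hP0 s u) (mul_nonneg (hT0 z) (Finset.sum_nonneg fun a _ =>
              mul_nonneg (hq.1 a) ?_))
            split_ifs <;> simp
      _ = ∑ u, ∑ z, ∑ s', ∑ a, q a * (T z * R u *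
            (if τ * (T z * R u) < P s' u * V a z then (1 : ℝ) else 0)) := by
          rw [Finset.sum_comm]; refine Finset.sum_congr rfl fun u _ => ?_
          rw [Finset.sum_comm]; refine Finset.sum_congr rfl fun z _ => ?_
          rw [Finset.sum_comm]; refine Finset.sum_congr rfl fun s' _ => ?_
          rw [← Finset.sum_mul, ← hR, ← mul_assoc, Finset.mul_sum]
          refine Finset.sum_congr rfl fun a _ => ?_
          ring
      _ ≤ ∑ u, ∑ z, ∑ s', ∑ a, q a * (P s' u * V a z / τ) := by
          refine Finset.sum_le_sum fun u _ => Finset.sum_le_sum fun z _ =>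
            Finset.sum_le_sum fun s' _ => Finset.sum_le_sum fun a _ =>
            mul_le_mul_of_nonneg_left ?_ (hq.1 a)
          rw [le_div_iff₀ hτ]
          split_ifs with h
          · linarith
          · simpa using mul_nonneg (hP0 _ _) ((hV _).1 _)
      _ = ∑ s', ∑ u, P s' u * ∑ a, q a * ((∑ z, V a z) / τ) := by
          rw [Finset.sum_comm (s := (Finset.univ : Finset M)) (t := (Finset.univ : Finset U))]
          refine Finset.sum_congr rfl fun u _ => ?_
          rw [Finset.sum_comm]; refine Finset.sum_congr rfl fun s' _ => ?_
          rw [Finset.sum_comm, Finset.mul_sum]; refine Finset.sum_congr rfl fun a _ => ?_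
          rw [Finset.sum_div, Finset.mul_sum, Finset.mul_sum]
          refine Finset.sum_congr rfl fun z _ => ?_
          ring
      _ = 1 / τ := by
          simp only [(hV _).2, ← Finset.sum_mul, hq.2, hP1, one_mul]
  calc _ ≤ ∑ c : M → A, (∏ s, q (c s)) * ∑ s, ∑ u, ∑ z,
        ((if P s u * V (c s) z ≤ τ * (T z * R u) then P s u * V (c s) z else 0) +
        ∑ s', if s' ≠ s then P s u * (V (c s) z *
        (if τ * (T z * R u) < P s' u * V (c s') z then 1 else 0)) else 0) :=
        Finset.sum_le_sum fun c _ => mul_le_mul_of_nonneg_left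
          (Finset.sum_le_sum fun s _ => Finset.sum_le_sum fun u _ =>
            Finset.sum_le_sum fun z _ => pt c s u z) (hc0 c)
    _ ≤ _ := by
        simp only [Finset.sum_add_distrib, mul_add]
        exact add_le_add hI.le hII

/-- Chernoff form of the threshold-decoding bound. -/
theorem random_coding_chernoff {q : A → ℝ} (hq : IsPmf q) {V : A → Z → ℝ}
    (hV : ∀ a, IsPmf (V a)) {T : Z → ℝ} (hT : ∀ z, T z = ∑ a, q a * V a z)
    {P : M → U → ℝ} (hP0 : ∀ s u, 0 ≤ P s u) (hP1 : ∑ s, ∑ u, P s u = 1)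
    {R : U → ℝ} (hR : ∀ u, R u = ∑ s, P s u) {τ : ℝ} (hτ : 0 < τ) {t : ℝ} (ht : 0 ≤ t) :
    ∑ c : M → A, (∏ s, q (c s)) * ∑ s, ∑ u, ∑ z,
      (if thresholdDecode (fun s => P s u * V (c s) z) (τ * (T z * R u)) ≠ s
        then P s u * V (c s) z else 0) ≤
    τ ^ t * (∑ s, ∑ u, P s u * (R u / P s u) ^ t) *
      (∑ a, q a * ∑ z, V a z * (T z / V a z) ^ t) + 1 / τ := by
  refine (random_coding_threshold hq hV hT hP0 hP1 hR hτ).trans (add_le_add ?_ le_rfl)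
  have hT0 : ∀ z, 0 ≤ T z := fun z => by
    rw [hT]; exact Finset.sum_nonneg fun a _ => mul_nonneg (hq.1 a) ((hV a).1 z)
  have hR0 : ∀ u, 0 ≤ R u := fun u => by
    rw [hR]; exact Finset.sum_nonneg fun s _ => hP0 s u
  have hpt : ∀ s u z a, (if P s u * V a z ≤ τ * (T z * R u) then P s u * V a z else 0) ≤
      τ ^ t * (P s u * (R u / P s u) ^ t) * (V a z * (T z / V a z) ^ t) := by
    intro s u z a
    have hp := hP0 s u
    have hv := (hV a).1 z
    have hrhs : 0 ≤ τ ^ t * (P s u * (R u / P s u) ^ t) * (V a z * (T z / V a z) ^ t) := by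
      have := hT0 z; have := hR0 u
      positivity
    split_ifs with h
    · rcases (mul_nonneg hp hv).eq_or_lt with h0 | h0
      · rw [← h0]; exact hrhs
      · have h1 : 1 ≤ τ * (R u / P s u) * (T z / V a z) := by
          rw [show τ * (R u / P s u) * (T z / V a z) = τ * (T z * R u) / (P s u * V a z) by ring,
            le_div_iff₀ h0, one_mul]
          exact h
        have h2 := Real.one_le_rpow h1 ht
        rw [Real.mul_rpow (mul_nonneg hτ.le (div_nonneg (hR0 u) hp)) (div_nonneg (hT0 z) hv),
          Real.mul_rpow hτ.le (div_nonneg (hR0 u) hp)] at h2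
        calc P s u * V a z = P s u * V a z * 1 := (mul_one _).symm
          _ ≤ P s u * V a z * (τ ^ t * (R u / P s u) ^ t * (T z / V a z) ^ t) :=
            mul_le_mul_of_nonneg_left h2 h0.le
          _ = _ := by ring
    · exact hrhs
  calc _ ≤ ∑ s, ∑ u, ∑ z, ∑ a, q a *
        (τ ^ t * (P s u * (R u / P s u) ^ t) * (V a z * (T z / V a z) ^ t)) :=
      Finset.sum_le_sum fun s _ => Finset.sum_le_sum fun u _ =>
        Finset.sum_le_sum fun z _ => Finset.sum_le_sum fun a _ =>
          mul_le_mul_of_nonneg_left (hpt s u z a) (hq.1 a)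
    _ = _ := by
      simp only [Finset.sum_comm (s := (Finset.univ : Finset Z)) (t := (Finset.univ : Finset A))]
      simp only [mul_left_comm (q _), ← Finset.mul_sum, ← Finset.sum_mul]
      congr 1
      refine Finset.sum_congr rfl fun a _ => ?_
      rw [Finset.mul_sum]
      exact Finset.sum_congr rfl fun z _ => by ring

end RandomCoding

section CausalChannel

theorem sum_arrow_prod {ι A B : Type*} [Fintype ι] [DecidableEq ι] [Fintype A] [Fintype B]
    (F : (ι → A) → (ι → B) → ℝ) :
    ∑ a : ι → A, ∑ b : ι → B, F a b =
      ∑ v : ι → A × B, F (fun i => (v i).1) (fun i => (v i).2) := by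
  rw [← Fintype.sum_prod_type']
  exact (Equiv.sum_comp (Equiv.arrowProdEquivProdArrow ι (fun _ => A) (fun _ => B))
    (fun x : (ι → A) × (ι → B) => F x.1 x.2)).symm

/-- The path probabilities of a causal (feedback) channel sum to one. -/
theorem sum_prod_causal {Z : Type*} [Fintype Z] [Nonempty Z] : ∀ {n : ℕ}
    (κ : Fin n → (Fin n → Z) → Z → ℝ)
    (_ : ∀ (k : Fin n) (z z' : Fin n → Z), (∀ j, j < k → z j = z' j) → κ k z = κ k z')
    (_ : ∀ k z, ∑ a, κ k z a = 1), ∑ z : Fin n → Z, ∏ k, κ k z (z k) = 1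
  | 0, _, _, _ => by simp
  | n + 1, κ, hc, h1 => by
    let z0 : Fin (n + 1) → Z := fun _ => Classical.arbitrary Z
    rw [← Equiv.sum_comp (Fin.consEquiv fun _ => Z), Fintype.sum_prod_type]
    rw [← h1 0 z0]
    refine Finset.sum_congr rfl fun a _ => ?_
    have ih := sum_prod_causal (fun (k : Fin n) z => κ k.succ (Fin.cons a z))
      (fun k z z' hz => hc _ _ _ fun j hj => by
        induction j using Fin.cases with
        | zero => rfl
        | succ j => simpa using hz j (Fin.succ_lt_succ_iff.1 hj))
      (fun k z => h1 _ _)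
    rw [← mul_one (κ 0 z0 a), ← ih, Finset.mul_sum]
    refine Finset.sum_congr rfl fun z _ => ?_
    rw [Fin.prod_univ_succ]
    have h0 : κ 0 (Fin.cons a z) = κ 0 z0 := hc _ _ _ fun j hj => absurd hj (Fin.not_lt_zero j)
    simp [Fin.consEquiv, h0]

variable {S1 W W3 X1 X3 Y Y3 : Type*}
  [Fintype S1] [Fintype W] [Fintype W3] [Fintype Y] [Fintype Y3]

theorem sum_source_prod {pSrc : S1 × W × W3 → ℝ} (hSrc : IsPmf pSrc) (n : ℕ) :
    ∑ s1 : Fin n → S1, ∑ w : Fin n → W, ∑ w3 : Fin n → W3,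
      ∏ k : Fin n, pSrc (s1 k, w k, w3 k) = 1 := by
  simp only [sum_arrow_prod (fun (w : Fin n → W) (w3 : Fin n → W3) =>
    ∏ k : Fin n, pSrc (_, w k, w3 k))]
  rw [sum_arrow_prod (fun (s : Fin n → S1) (w : Fin n → W × W3) =>
    ∏ k : Fin n, pSrc (s k, (w k).1, (w k).2))]
  exact sum_pi_prod_eq_one (p := fun _ => pSrc) fun _ => hSrc.2

/-- If a good event forces both correct decoding and relay inputs equal to those of a
genie-aided relay knowing the source, the error probability is at most the probability of the
complement of that event under the genie-aided channel law. -/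
theorem crbcErrProb_le_genie [DecidableEq S1] [Nonempty (Y × Y3)]
    {pSrc : S1 × W × W3 → ℝ} (hSrc : IsPmf pSrc)
    {Q : X1 × X3 → Y × Y3 → ℝ} (hQ : ∀ x, IsPmf (Q x)) {n : ℕ}
    {f1 : (Fin n → S1) → Fin n → X1}
    {f3 : Fin n → (Fin n → Y3) → (Fin n → W3) → X3}
    {g3 : (Fin n → Y3) → (Fin n → W3) → Fin n → S1}
    {g : (Fin n → Y) → (Fin n → W) → Fin n → S1} (hf3 : CausalRelay f3)
    (x3 : (Fin n → S1) → Fin n → X3)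
    (G : (Fin n → S1) → (Fin n → W) → (Fin n → W3) → (Fin n → Y) → (Fin n → Y3) → Prop)
    [∀ s1 w w3 y y3, Decidable (G s1 w w3 y y3)]
    (hG : ∀ s1 w w3 y y3, G s1 w w3 y y3 →
      g y w = s1 ∧ g3 y3 w3 = s1 ∧ ∀ k, f3 k y3 w3 = x3 s1 k) :
    crbcErrProb pSrc Q n f1 f3 g3 g ≤
      ∑ s1, ∑ w, ∑ w3, ∑ y, ∑ y3, if G s1 w w3 y y3 then 0 else
        (∏ k, pSrc (s1 k, w k, w3 k)) * ∏ k, Q (f1 s1 k, x3 s1 k) (y k, y3 k) := by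
  have tot : ∀ κ : (Fin n → S1) → Fin n → (Fin n → Y3) → (Fin n → W3) → X3,
      (∀ s1, CausalRelay (κ s1)) →
      ∑ s1 : Fin n → S1, ∑ w : Fin n → W, ∑ w3 : Fin n → W3,
        ∑ y : Fin n → Y, ∑ y3 : Fin n → Y3, (∏ k, pSrc (s1 k, w k, w3 k)) *
          ∏ k, Q (f1 s1 k, κ s1 k y3 w3) (y k, y3 k) = 1 := by
    intro κ hκ
    rw [← sum_source_prod hSrc n]
    refine Finset.sum_congr rfl fun s1 _ => Finset.sum_congr rfl fun w _ =>
      Finset.sum_congr rfl fun w3 _ => ?_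
    simp only [← Finset.mul_sum]
    rw [sum_arrow_prod fun (y : Fin n → Y) (y3 : Fin n → Y3) =>
      ∏ k, Q (f1 s1 k, κ s1 k y3 w3) (y k, y3 k)]
    rw [sum_prod_causal (Z := Y × Y3)
      (fun k v => Q (f1 s1 k, κ s1 k (fun i => (v i).2) w3)), mul_one]
    · intro k z z' hz
      rw [hκ s1 k _ (fun i => (z' i).2) w3 fun j hj => by rw [hz j hj]]
    · intro k z
      exact (hQ _).2
  have hA := tot (fun _ => f3) (fun _ => hf3)
  have hΓ := tot (fun s1 k _ _ => x3 s1 k) (fun s1 k y y' w _ => rfl)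
  have hp : ∀ (s1 : Fin n → S1) (w : Fin n → W) (w3 : Fin n → W3),
      0 ≤ ∏ k, pSrc (s1 k, w k, w3 k) := fun s1 w w3 =>
    Finset.prod_nonneg fun _ _ => hSrc.1 _
  have hq : ∀ (x : Fin n → X1 × X3) (y : Fin n → Y) (y3 : Fin n → Y3),
      0 ≤ ∏ k, Q (x k) (y k, y3 k) := fun x y y3 =>
    Finset.prod_nonneg fun _ _ => (hQ _).1 _
  have key : crbcErrProb pSrc Q n f1 f3 g3 g +
      ∑ s1 : Fin n → S1, ∑ w : Fin n → W, ∑ w3 : Fin n → W3,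
        ∑ y : Fin n → Y, ∑ y3 : Fin n → Y3, (∏ k, pSrc (s1 k, w k, w3 k)) *
          ∏ k, Q (f1 s1 k, x3 s1 k) (y k, y3 k) ≤
      (∑ s1, ∑ w, ∑ w3, ∑ y, ∑ y3, if G s1 w w3 y y3 then 0 else
        (∏ k, pSrc (s1 k, w k, w3 k)) * ∏ k, Q (f1 s1 k, x3 s1 k) (y k, y3 k)) +
      ∑ s1 : Fin n → S1, ∑ w : Fin n → W, ∑ w3 : Fin n → W3,
        ∑ y : Fin n → Y, ∑ y3 : Fin n → Y3, (∏ k, pSrc (s1 k, w k, w3 k)) *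
          ∏ k, Q (f1 s1 k, f3 k y3 w3) (y k, y3 k) := by
    simp only [crbcErrProb, ← Finset.sum_add_distrib]
    refine Finset.sum_le_sum fun s1 _ => Finset.sum_le_sum fun w _ =>
      Finset.sum_le_sum fun w3 _ => Finset.sum_le_sum fun y _ => Finset.sum_le_sum fun y3 _ => ?_
    by_cases hg : G s1 w w3 y y3
    · obtain ⟨h1, h2, h3⟩ := hG _ _ _ _ _ hg
      simp [hg, h1, h2, h3]
    · have := mul_nonneg (hp s1 w w3) (hq (fun k => (f1 s1 k, f3 k y3 w3)) y y3)
      simp only [hg, if_false]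
      split_ifs <;> linarith
  rw [hA, hΓ] at key
  linarith

end CausalChannel

section BlockMarkov

variable {M : Type*} {B : ℕ}

/-- The message of the previous block, for each of the `B + 1` channel blocks. -/
def oldMsg (s0 : M) (σ : Fin B → M) : Fin (B + 1) → M :=
  Fin.cons (α := fun _ => M) s0 σ

/-- The fresh message of each of the `B + 1` channel blocks. -/
def newMsg (s0 : M) (σ : Fin B → M) : Fin (B + 1) → M :=
  Fin.snoc (α := fun _ => M) σ s0

@[simp] theorem oldMsg_succ (s0 : M) (σ : Fin B → M) (b : Fin B) : oldMsg s0 σ b.succ = σ b := rfl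

@[simp] theorem newMsg_castSucc (s0 : M) (σ : Fin B → M) (b : Fin B) :
    newMsg s0 σ b.castSucc = σ b := by simp [newMsg]

theorem oldMsg_update_castSucc (s0 : M) (σ : Fin B → M) (b : Fin B) (s : M) :
    oldMsg s0 (Function.update σ b s) b.castSucc = oldMsg s0 σ b.castSucc := by
  generalize hc : b.castSucc = c
  induction c using Fin.cases with
  | zero => rfl
  | succ j =>
    have : j ≠ b := by
      rintro rfl
      have := congrArg Fin.val hc
      simp at this
    simp [this]

theorem newMsg_update_succ (s0 : M) (σ : Fin B → M) (b : Fin B) (s : M) :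
    newMsg s0 (Function.update σ b s) b.succ = newMsg s0 σ b.succ := by
  generalize hc : b.succ = c
  induction c using Fin.lastCases with
  | last => simp [newMsg]
  | cast j =>
    have : j ≠ b := by
      rintro rfl
      have := congrArg Fin.val hc
      simp at this
    simp [this]

variable {U U3 Z Z3 : Type*} [Fintype M] [DecidableEq M] [Fintype U] [Fintype U3]
  [Fintype Z] [Fintype Z3]

/-- Union bound over the blocks for genie-aided block-Markov transmission. -/
theorem blockMarkov_union_bound {p : M × U × U3 → ℝ} (hp : IsPmf p)
    {Q : M → M → Z × Z3 → ℝ} (hQ : ∀ s s', IsPmf (Q s s')) (s0 : M)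
    (d3 : M → Z3 → U3 → M) (d : M → Z → U → M) :
    ∑ z : Fin B → M × U × U3, ∑ v : Fin (B + 1) → Z × Z3,
      (if ∀ b : Fin B,
          d3 (oldMsg s0 (fun i => (z i).1) b.castSucc) (v b.castSucc).2 (z b).2.2 = (z b).1 ∧
          d (newMsg s0 (fun i => (z i).1) b.succ) (v b.succ).1 (z b).2.1 = (z b).1
        then 0 else (∏ b, p (z b)) *
          ∏ b, Q (newMsg s0 (fun i => (z i).1) b) (oldMsg s0 (fun i => (z i).1) b) (v b)) ≤
    ∑ b : Fin B, ∑ z : Fin B → M × U × U3, (∏ b, p (z b)) *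
      ((∑ a, p a * ∑ o, if d3 (oldMsg s0 (fun i => (z i).1) b.castSucc) o.2 a.2.2 ≠ a.1 then
          Q a.1 (oldMsg s0 (fun i => (z i).1) b.castSucc) o else 0) +
        ∑ a, p a * ∑ o, if d (newMsg s0 (fun i => (z i).1) b.succ) o.1 a.2.1 ≠ a.1 then
          Q (newMsg s0 (fun i => (z i).1) b.succ) a.1 o else 0) := by
  have hupd : ∀ (z : Fin B → M × U × U3) b a,
      (fun i => (Function.update z b a i).1) = Function.update (fun i => (z i).1) b a.1 := by
    intro z b a
    funext i
    by_cases h : i = b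
    · subst h; simp
    · simp [h]
  have hp0 : ∀ z : Fin B → M × U × U3, 0 ≤ ∏ b, p (z b) := fun z =>
    Finset.prod_nonneg fun _ _ => hp.1 _
  have hq0 : ∀ (z : Fin B → M × U × U3) (v : Fin (B + 1) → Z × Z3), 0 ≤
      ∏ b, Q (newMsg s0 (fun i => (z i).1) b) (oldMsg s0 (fun i => (z i).1) b) (v b) :=
    fun z v => Finset.prod_nonneg fun _ _ => (hQ _ _).1 _
  calc _ ≤ ∑ z : Fin B → M × U × U3, ∑ v : Fin (B + 1) → Z × Z3, ∑ b : Fin B,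
        (∏ b, p (z b)) * ((∏ b, Q (newMsg s0 (fun i => (z i).1) b)
          (oldMsg s0 (fun i => (z i).1) b) (v b)) *
        (if d3 (oldMsg s0 (fun i => (z i).1) b.castSucc) (v b.castSucc).2 (z b).2.2 ≠ (z b).1
          then 1 else 0) + (∏ b, Q (newMsg s0 (fun i => (z i).1) b)
          (oldMsg s0 (fun i => (z i).1) b) (v b)) *
        (if d (newMsg s0 (fun i => (z i).1) b.succ) (v b.succ).1 (z b).2.1 ≠ (z b).1
          then 1 else 0)) := by
        refine Finset.sum_le_sum fun z _ => Finset.sum_le_sum fun v _ => ?_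
        have hnn : ∀ b ∈ Finset.univ, 0 ≤ (∏ b, p (z b)) * ((∏ b, Q (newMsg s0 (fun i => (z i).1) b)
          (oldMsg s0 (fun i => (z i).1) b) (v b)) *
          (if d3 (oldMsg s0 (fun i => (z i).1) b.castSucc) (v b.castSucc).2 (z b).2.2 ≠ (z b).1
            then (1 : ℝ) else 0) + (∏ b, Q (newMsg s0 (fun i => (z i).1) b)
            (oldMsg s0 (fun i => (z i).1) b) (v b)) *
          (if d (newMsg s0 (fun i => (z i).1) b.succ) (v b.succ).1 (z b).2.1 ≠ (z b).1
            then 1 else 0)) := by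
          intro b _
          have := hq0 z v
          refine mul_nonneg (hp0 z) (add_nonneg (mul_nonneg this ?_) (mul_nonneg this ?_)) <;>
            split_ifs <;> simp
        split_ifs with h
        · exact Finset.sum_nonneg hnn
        · push Not at h
          obtain ⟨b, hb⟩ := h
          refine le_trans ?_ (Finset.single_le_sum hnn (Finset.mem_univ b))
          refine mul_le_mul_of_nonneg_left ?_ (hp0 z)
          have := hq0 z v
          by_cases h3 : d3 (oldMsg s0 (fun i => (z i).1) b.castSucc) (v b.castSucc).2 (z b).2.2 =
            (z b).1
          · simp [h3, hb h3]
          · simp only [h3, ne_eq, not_false_eq_true, if_true, mul_one]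
            split_ifs <;> linarith
    _ = ∑ b : Fin B, ∑ z : Fin B → M × U × U3, (∏ b, p (z b)) *
        ((∑ o, if d3 (oldMsg s0 (fun i => (z i).1) b.castSucc) o.2 (z b).2.2 ≠ (z b).1 then
          Q (z b).1 (oldMsg s0 (fun i => (z i).1) b.castSucc) o else 0) +
        ∑ o, if d (newMsg s0 (fun i => (z i).1) b.succ) o.1 (z b).2.1 ≠ (z b).1 then
          Q (newMsg s0 (fun i => (z i).1) b.succ) (z b).1 o else 0) := by
        rw [Finset.sum_comm (t := (Finset.univ : Finset (Fin B → M × U × U3)))]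
        refine Finset.sum_congr rfl fun z _ => ?_
        rw [Finset.sum_comm]
        refine Finset.sum_congr rfl fun b _ => ?_
        rw [← Finset.mul_sum, Finset.sum_add_distrib]
        have hQ1 : ∀ b, ∑ o, Q (newMsg s0 (fun i => (z i).1) b)
          (oldMsg s0 (fun i => (z i).1) b) o = 1 := fun b => (hQ _ _).2
        congr 2
        · rw [sum_pi_marginal hQ1 b.castSucc (fun o =>
            if d3 (oldMsg s0 (fun i => (z i).1) b.castSucc) o.2 (z b).2.2 ≠ (z b).1
            then (1 : ℝ) else 0)]
          simp
        · rw [sum_pi_marginal hQ1 b.succ (fun o =>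
            if d (newMsg s0 (fun i => (z i).1) b.succ) o.1 (z b).2.1 ≠ (z b).1
            then (1 : ℝ) else 0)]
          simp
    _ = _ := by
        refine Finset.sum_congr rfl fun b _ => ?_
        rw [sum_pi_resample (fun _ => p) b hp.2]
        refine Finset.sum_congr rfl fun z _ => ?_
        simp only [hupd, oldMsg_update_castSucc, newMsg_update_succ, Function.update_self,
          mul_add, Finset.sum_add_distrib]

end BlockMarkov

section BlockCode

variable {M U Z : Type*} {B : ℕ}

/-- Forward (block by block) message estimates of the relay. -/
def forwardEst (s0 : M) (d : M → Z → U → M) (y : Fin (B + 1) → Z) (w : Fin B → U) :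
    Fin (B + 1) → M :=
  Fin.induction s0 fun b m => d m (y b.castSucc) (w b)

/-- Backward message estimates of the destination. -/
def backwardEst (s0 : M) (d : M → Z → U → M) (y : Fin (B + 1) → Z) (w : Fin B → U) :
    Fin (B + 1) → M :=
  Fin.reverseInduction s0 fun b m => d m (y b.succ) (w b)

theorem forwardEst_eq_oldMsg {s0 : M} {d : M → Z → U → M} {y : Fin (B + 1) → Z} {w : Fin B → U}
    {σ : Fin B → M} (h : ∀ b : Fin B, d (oldMsg s0 σ b.castSucc) (y b.castSucc) (w b) = σ b)
    (b : Fin (B + 1)) : forwardEst s0 d y w b = oldMsg s0 σ b := by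
  induction b using Fin.induction with
  | zero => rfl
  | succ b ih => rw [oldMsg_succ, ← h b, ← ih]; rfl

theorem backwardEst_eq_newMsg {s0 : M} {d : M → Z → U → M} {y : Fin (B + 1) → Z} {w : Fin B → U}
    {σ : Fin B → M} (h : ∀ b : Fin B, d (newMsg s0 σ b.succ) (y b.succ) (w b) = σ b)
    (b : Fin (B + 1)) : backwardEst s0 d y w b = newMsg s0 σ b := by
  induction b using Fin.reverseInduction with
  | last => simp [backwardEst, newMsg]
  | cast b ih =>
    rw [newMsg_castSucc, ← h b, ← ih]
    simp [backwardEst]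

theorem forwardEst_congr (s0 : M) (d : M → Z → U → M) {y y' : Fin (B + 1) → Z} (w : Fin B → U)
    (b : Fin (B + 1)) (h : ∀ b', b' < b → y b' = y' b') :
    forwardEst s0 d y w b = forwardEst s0 d y' w b := by
  induction b using Fin.induction with
  | zero => rfl
  | succ b ih =>
    have h1 := ih fun b' hb' => h b' (hb'.trans (Fin.castSucc_lt_succ))
    change d (forwardEst s0 d y w b.castSucc) (y b.castSucc) (w b) =
      d (forwardEst s0 d y' w b.castSucc) (y' b.castSucc) (w b)
    rw [h1, h _ Fin.castSucc_lt_succ]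

variable {S1 W W3 X1 X3 Y Y3 : Type*}
  [Fintype S1] [Fintype W] [Fintype W3] [Fintype Y] [Fintype Y3]

theorem sum_arrow_prod₃ {ι A B C : Type*} [Fintype ι] [DecidableEq ι] [Fintype A] [Fintype B]
    [Fintype C] (F : (ι → A × B × C) → ℝ) :
    ∑ v, F v = ∑ a : ι → A, ∑ b : ι → B, ∑ c : ι → C, F fun i => (a i, b i, c i) := by
  simp only [sum_arrow_prod fun (b : ι → B) (c : ι → C) => F fun i => (_, b i, c i)]
  exact (sum_arrow_prod fun (a : ι → A) (b : ι → B × C) => F fun i => (a i, b i)).symm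

theorem sum_blocks {n N : ℕ} {T : Type*} [Fintype T] (e : Fin B × Fin N ≃ Fin n)
    (F : (Fin n → T) → ℝ) :
    ∑ s, F s = ∑ σ : Fin B → Fin N → T, F fun k => σ (e.symm k).1 (e.symm k).2 := by
  rw [← Equiv.sum_comp ((Equiv.curry (Fin B) (Fin N) T).symm.trans (e.arrowCongr (Equiv.refl T)))]
  rfl

theorem prod_blocks {n N : ℕ} (e : Fin B × Fin N ≃ Fin n) (F : Fin n → ℝ) :
    ∏ k, F k = ∏ b, ∏ j, F (e (b, j)) := by
  rw [← Equiv.prod_comp e, Fintype.prod_prod_type]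

/-- A block-Markov code, with forward decoding at the relay and backward decoding at the
destination, errs only if one of its genie-aided single-block decoders does. -/
theorem exists_blockMarkov_code [DecidableEq S1] [Nonempty (Y × Y3)]
    {pSrc : S1 × W × W3 → ℝ} (hSrc : IsPmf pSrc)
    {Q : X1 × X3 → Y × Y3 → ℝ} (hQ : ∀ x, IsPmf (Q x)) {n B Ns Nc : ℕ}
    (eS : Fin B × Fin Ns ≃ Fin n) (eC : Fin (B + 1) × Fin Nc ≃ Fin n)
    (hmono : ∀ b j b' j', b < b' → eC (b, j) < eC (b', j'))
    (x1 : (Fin Ns → S1) → (Fin Ns → S1) → Fin Nc → X1) (x3 : (Fin Ns → S1) → Fin Nc → X3)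
    (d3 : (Fin Ns → S1) → (Fin Nc → Y3) → (Fin Ns → W3) → (Fin Ns → S1))
    (d : (Fin Ns → S1) → (Fin Nc → Y) → (Fin Ns → W) → (Fin Ns → S1)) (s0 : Fin Ns → S1) :
    ∃ (f1 : (Fin n → S1) → Fin n → X1)
      (f3 : Fin n → (Fin n → Y3) → (Fin n → W3) → X3)
      (g3 : (Fin n → Y3) → (Fin n → W3) → Fin n → S1)
      (g : (Fin n → Y) → (Fin n → W) → Fin n → S1), CausalRelay f3 ∧
      crbcErrProb pSrc Q n f1 f3 g3 g ≤
      ∑ z : Fin B → (Fin Ns → S1) × (Fin Ns → W) × (Fin Ns → W3),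
      ∑ v : Fin (B + 1) → (Fin Nc → Y) × (Fin Nc → Y3),
      (if ∀ b : Fin B,
          d3 (oldMsg s0 (fun i => (z i).1) b.castSucc) (v b.castSucc).2 (z b).2.2 = (z b).1 ∧
          d (newMsg s0 (fun i => (z i).1) b.succ) (v b.succ).1 (z b).2.1 = (z b).1
        then 0 else (∏ b, ∏ j, pSrc ((z b).1 j, (z b).2.1 j, (z b).2.2 j)) *
          ∏ b, ∏ j, Q (x1 (newMsg s0 (fun i => (z i).1) b) (oldMsg s0 (fun i => (z i).1) b) j,
            x3 (oldMsg s0 (fun i => (z i).1) b) j) ((v b).1 j, (v b).2 j)) := by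
  let blS : (Fin n → S1) → Fin B → Fin Ns → S1 := fun s b j => s (eS (b, j))
  let blW : (Fin n → W) → Fin B → Fin Ns → W := fun s b j => s (eS (b, j))
  let blW3 : (Fin n → W3) → Fin B → Fin Ns → W3 := fun s b j => s (eS (b, j))
  let blY : (Fin n → Y) → Fin (B + 1) → Fin Nc → Y := fun s b j => s (eC (b, j))
  let blY3 : (Fin n → Y3) → Fin (B + 1) → Fin Nc → Y3 := fun s b j => s (eC (b, j))
  let f1 : (Fin n → S1) → Fin n → X1 := fun s k =>
    x1 (newMsg s0 (blS s) (eC.symm k).1) (oldMsg s0 (blS s) (eC.symm k).1) (eC.symm k).2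
  let f3 : Fin n → (Fin n → Y3) → (Fin n → W3) → X3 := fun k y3 w3 =>
    x3 (forwardEst s0 d3 (blY3 y3) (blW3 w3) (eC.symm k).1) (eC.symm k).2
  let g3 : (Fin n → Y3) → (Fin n → W3) → Fin n → S1 := fun y3 w3 k =>
    forwardEst s0 d3 (blY3 y3) (blW3 w3) (eS.symm k).1.succ (eS.symm k).2
  let g : (Fin n → Y) → (Fin n → W) → Fin n → S1 := fun y w k =>
    backwardEst s0 d (blY y) (blW w) (eS.symm k).1.castSucc (eS.symm k).2
  have hcausal : CausalRelay f3 := by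
    intro k y y' w hy
    have : forwardEst s0 d3 (blY3 y) (blW3 w) (eC.symm k).1 =
        forwardEst s0 d3 (blY3 y') (blW3 w) (eC.symm k).1 := by
      refine forwardEst_congr s0 d3 _ _ fun b' hb' => ?_
      funext j
      refine hy _ ?_
      have := hmono b' j _ (eC.symm k).2 hb'
      simpa using this
    simp only [f3, this]
  refine ⟨f1, f3, g3, g, hcausal, ?_⟩
  refine (crbcErrProb_le_genie hSrc hQ hcausal
    (fun s k => x3 (oldMsg s0 (blS s) (eC.symm k).1) (eC.symm k).2)
    (fun s w w3 y y3 => ∀ b : Fin B,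
      d3 (oldMsg s0 (blS s) b.castSucc) (blY3 y3 b.castSucc) (blW3 w3 b) = blS s b ∧
      d (newMsg s0 (blS s) b.succ) (blY y b.succ) (blW w b) = blS s b) ?_).trans (le_of_eq ?_)
  · intro s w w3 y y3 hG
    refine ⟨?_, ?_, fun k => ?_⟩
    · funext k
      simp only [g, backwardEst_eq_newMsg fun b => (hG b).2]
      simp [blS]
    · funext k
      simp only [g3, forwardEst_eq_oldMsg fun b => (hG b).1]
      simp [blS]
    · simp only [f3, forwardEst_eq_oldMsg fun b => (hG b).1]
  · simp only [sum_blocks eS (T := S1), sum_blocks eS (T := W), sum_blocks eS (T := W3),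
      sum_blocks eC (T := Y), sum_blocks eC (T := Y3), prod_blocks eS (fun k => pSrc _),
      prod_blocks eC (fun k => Q _ _), f1, blS, blW, blW3, blY, blY3, Equiv.symm_apply_apply]
    simp only [sum_arrow_prod₃]
    refine Finset.sum_congr rfl fun s1 _ => Finset.sum_congr rfl fun w _ =>
      Finset.sum_congr rfl fun w3 _ => ?_
    exact sum_arrow_prod _

end BlockCode

section SuperpositionCodebook

variable {M U A3 A1 Z : Type*} [Fintype M] [DecidableEq M] [Fintype U] [Fintype A3]
  [Fintype A1] [Fintype Z]

/-- Law of a cloud centre together with its satellite codewords, one for each message. -/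
noncomputable def cloudPmf (M : Type*) [Fintype M] (p : A3 → ℝ) (K : A3 → A1 → ℝ)
    (a : A3 × (M → A1)) : ℝ :=
  p a.1 * ∏ s, K a.1 (a.2 s)

theorem sum_cloudPmf_mul (p : A3 → ℝ) (K : A3 → A1 → ℝ) (F : A3 × (M → A1) → ℝ) :
    ∑ a, cloudPmf M p K a * F a = ∑ x, p x * ∑ c : M → A1, (∏ s, K x (c s)) * F (x, c) := by
  simp only [Fintype.sum_prod_type, cloudPmf, Finset.mul_sum, mul_assoc]

theorem isPmf_cloudPmf {p : A3 → ℝ} (hp : IsPmf p) {K : A3 → A1 → ℝ} (hK : ∀ x, IsPmf (K x)) :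
    IsPmf (cloudPmf M p K) := by
  refine ⟨fun a => mul_nonneg (hp.1 _) (Finset.prod_nonneg fun s _ => (hK _).1 _), ?_⟩
  have h := sum_cloudPmf_mul (M := M) p K fun _ => 1
  simp only [mul_one, sum_pi_prod_eq_one fun _ : M => (hK _).2, hp.2] at h
  exact h

theorem sum_cloudPmf_marginal (p : A3 → ℝ) {K : A3 → A1 → ℝ} (hK : ∀ x, IsPmf (K x))
    (s : M) (F : A3 → A1 → ℝ) :
    ∑ a : A3 × (M → A1), cloudPmf M p K a * F a.1 (a.2 s) =
      ∑ x, p x * ∑ x1, K x x1 * F x x1 := by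
  rw [sum_cloudPmf_mul p K fun a => F a.1 (a.2 s)]
  refine Finset.sum_congr rfl fun x _ => ?_
  rw [← sum_pi_marginal (fun _ : M => (hK x).2) s]

variable [Nonempty M]

theorem satellite_random_coding {p : A3 → ℝ} (hp : IsPmf p) {K : A3 → A1 → ℝ}
    (hK : ∀ x, IsPmf (K x)) {V : A3 → A1 → Z → ℝ} (hV : ∀ x x1, IsPmf (V x x1))
    {T : A3 → Z → ℝ} (hT : ∀ x z, T x z = ∑ x1, K x x1 * V x x1 z)
    {P : M → U → ℝ} (hP0 : ∀ s u, 0 ≤ P s u) (hP1 : ∑ s, ∑ u, P s u = 1)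
    {R : U → ℝ} (hR : ∀ u, R u = ∑ s, P s u) {τ : ℝ} (hτ : 0 < τ) {t : ℝ} (ht : 0 ≤ t) (s' : M) :
    ∑ C : M → A3 × (M → A1), (∏ i, cloudPmf M p K (C i)) * ∑ s, ∑ u, ∑ z,
      (if thresholdDecode (fun s => P s u * V (C s').1 ((C s').2 s) z)
        (τ * (T (C s').1 z * R u)) ≠ s then P s u * V (C s').1 ((C s').2 s) z else 0) ≤
    τ ^ t * (∑ s, ∑ u, P s u * (R u / P s u) ^ t) *
      (∑ x, p x * ∑ x1, K x x1 * ∑ z, V x x1 z * (T x z / V x x1 z) ^ t) + 1 / τ := by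
  rw [sum_pi_marginal (fun _ : M => (isPmf_cloudPmf hp hK).2) s' (fun a => ∑ s, ∑ u, ∑ z,
      (if thresholdDecode (fun s => P s u * V a.1 (a.2 s) z)
        (τ * (T a.1 z * R u)) ≠ s then P s u * V a.1 (a.2 s) z else 0)), sum_cloudPmf_mul]
  refine (Finset.sum_le_sum fun x _ => mul_le_mul_of_nonneg_left
    (random_coding_chernoff (hK x) (hV x) (hT x) hP0 hP1 hR hτ ht) (hp.1 x)).trans (le_of_eq ?_)
  simp only [mul_add, Finset.sum_add_distrib, ← Finset.sum_mul, hp.2, one_mul,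
    mul_left_comm (p _), ← Finset.mul_sum]

theorem cloud_random_coding {p : A3 → ℝ} (hp : IsPmf p) {K : A3 → A1 → ℝ}
    (hK : ∀ x, IsPmf (K x)) {V : A3 → A1 → Z → ℝ} (hV : ∀ x x1, IsPmf (V x x1))
    {T : Z → ℝ} (hT : ∀ z, T z = ∑ x, p x * ∑ x1, K x x1 * V x x1 z)
    {P : M → U → ℝ} (hP0 : ∀ s u, 0 ≤ P s u) (hP1 : ∑ s, ∑ u, P s u = 1)
    {R : U → ℝ} (hR : ∀ u, R u = ∑ s, P s u) {τ : ℝ} (hτ : 0 < τ) {t : ℝ} (ht : 0 ≤ t) (r : M) :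
    ∑ C : M → A3 × (M → A1), (∏ i, cloudPmf M p K (C i)) * ∑ s, ∑ u, ∑ z,
      (if thresholdDecode (fun s => P s u * V (C s).1 ((C s).2 r) z)
        (τ * (T z * R u)) ≠ s then P s u * V (C s).1 ((C s).2 r) z else 0) ≤
    τ ^ t * (∑ s, ∑ u, P s u * (R u / P s u) ^ t) *
      (∑ x, p x * ∑ x1, K x x1 * ∑ z, V x x1 z * (T z / V x x1 z) ^ t) + 1 / τ := by
  refine (random_coding_chernoff (isPmf_cloudPmf hp hK)
    (V := fun a => V a.1 (a.2 r)) (fun a => hV _ _) (fun z => ?_) hP0 hP1 hR hτ ht).trans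
    (le_of_eq ?_)
  · rw [hT, sum_cloudPmf_marginal p hK r fun x x1 => V x x1 z]
  · rw [sum_cloudPmf_marginal p hK r fun x x1 => ∑ z, V x x1 z * (T z / V x x1 z) ^ t]

end SuperpositionCodebook

section Exponents

open Filter Topology

theorem hasDerivAt_sum_mul_rpow {Ω : Type*} [Fintype Ω] {μ r : Ω → ℝ}
    (hr : ∀ ω, μ ω ≠ 0 → 0 < r ω) :
    HasDerivAt (fun t : ℝ => ∑ ω, μ ω * r ω ^ t) (∑ ω, μ ω * Real.log (r ω)) 0 := by
  refine HasDerivAt.fun_sum fun ω _ => ?_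
  by_cases h : μ ω = 0
  · simpa [h] using hasDerivAt_const (0 : ℝ) (0 : ℝ)
  · have := (Real.hasStrictDerivAt_const_rpow (hr ω h) 0).hasDerivAt.const_mul (μ ω)
    simpa using this

/-- If `B + 1` source units of rate `H` carry less than `B` channel units of rate `I`, the
threshold-decoding bound vanishes for a suitable threshold and tilting parameter. -/
theorem exists_exponent {a c : ℝ → ℝ} {H I : ℝ} (ha0 : a 0 = 1) (hc0 : c 0 = 1)
    (hapos : ∀ t, 0 ≤ a t) (hcpos : ∀ t, 0 ≤ c t)
    (ha : HasDerivAt a H 0) (hc : HasDerivAt c (-I) 0) {B : ℕ} (hB : (B + 1 : ℝ) * H < B * I) :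
    ∃ γ t : ℝ, 0 < t ∧
      Tendsto (fun m : ℕ => Real.exp (γ * m) ^ t * a t ^ ((B + 1) * m) * c t ^ (B * m) +
        1 / Real.exp (γ * m)) atTop (𝓝 0) := by
  set γ := (B * I - (B + 1) * H) / 2 with hγ
  have hγ0 : 0 < γ := by rw [hγ]; linarith
  have hexp : HasDerivAt (fun t => Real.exp (γ * t)) γ 0 := by
    simpa using ((hasDerivAt_id (0 : ℝ)).const_mul γ).exp
  have hG : HasDerivAt (fun t => Real.exp (γ * t) * a t ^ (B + 1) * c t ^ B)
      (γ + (B + 1) * H - B * I) 0 := by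
    have := (hexp.mul (ha.pow (B + 1))).mul (hc.pow B)
    refine this.congr_deriv ?_
    simp [ha0, hc0]
    ring
  have hneg : γ + (B + 1) * H - B * I < 0 := by rw [hγ]; linarith
  obtain ⟨t, ht, hlt⟩ : ∃ t : ℝ, 0 < t ∧ Real.exp (γ * t) * a t ^ (B + 1) * c t ^ B < 1 := by
    have h1 := hG.hasDerivWithinAt (s := Set.Ioi 0)
    have h2 := (hasDerivWithinAt_iff_tendsto_slope' (by simp)).1 h1
    have h3 := (h2.eventually_lt_const hneg).and self_mem_nhdsWithin
    obtain ⟨t, h4, h5⟩ := h3.exists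
    refine ⟨t, h5, ?_⟩
    have h5 : (0 : ℝ) < t := h5
    rw [slope_def_field] at h4
    simp only [mul_zero, Real.exp_zero, ha0, hc0, one_pow, mul_one, sub_zero] at h4
    rw [div_lt_iff₀ h5] at h4
    linarith
  refine ⟨γ, t, ht, ?_⟩
  have hpow : ∀ m : ℕ, Real.exp (γ * m) ^ t * a t ^ ((B + 1) * m) * c t ^ (B * m) =
      (Real.exp (γ * t) * a t ^ (B + 1) * c t ^ B) ^ m := by
    intro m
    rw [mul_pow, mul_pow, ← pow_mul, ← pow_mul, ← Real.exp_mul, ← Real.exp_nat_mul]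
    congr 3
    ring_nf
  simp only [hpow]
  rw [← add_zero (0 : ℝ)]
  refine (tendsto_pow_atTop_nhds_zero_of_lt_one ?_ hlt).add ?_
  · have := hapos t
    have := hcpos t
    positivity
  · have : ∀ m : ℕ, 1 / Real.exp (γ * m) = Real.exp (-γ) ^ m := by
      intro m
      rw [← Real.exp_nat_mul, one_div, ← Real.exp_neg]
      congr 1
      ring
    simp only [this]
    exact tendsto_pow_atTop_nhds_zero_of_lt_one (Real.exp_pos _).le
      (Real.exp_lt_one_iff.2 (by linarith))

end Exponents

section Entropy

variable {Ω Ω' α β γ : Type*} [Fintype Ω] [Fintype Ω'] [Fintype α] [DecidableEq α]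
  [Fintype β] [DecidableEq β] [Fintype γ] [DecidableEq γ]

theorem entropyOf_map {μ : Ω → ℝ} {ν : Ω' → ℝ} {f : Ω → Ω'}
    (hν : ∀ F : Ω' → ℝ, ∑ ω, μ ω * F (f ω) = ∑ ω, ν ω * F ω) (X : Ω' → α) :
    entropyOf μ (fun ω => X (f ω)) = entropyOf ν X := by
  refine Finset.sum_congr rfl fun a _ => ?_
  have := hν fun ω => if X ω = a then 1 else 0
  simp only [mul_ite, mul_one, mul_zero] at this
  rw [this]

theorem entropyOf_eq_neg_sum {μ : Ω → ℝ} {X : Ω → α} {P : Ω → ℝ}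
    (hP : ∀ ω, (∑ ω', if X ω' = X ω then μ ω' else 0) = P ω) :
    entropyOf μ X = -∑ ω, μ ω * Real.log (P ω) := by
  simp only [entropyOf, Real.negMulLog, neg_mul, Finset.sum_neg_distrib, neg_inj, Finset.sum_mul]
  rw [Finset.sum_comm]
  refine Finset.sum_congr rfl fun ω _ => ?_
  rw [← hP ω, Finset.sum_eq_single (X ω)]
  · simp
  · intro a _ ha
    simp [ha.symm]
  · simp

theorem condEntropyOf_fst_snd (p : α × β → ℝ) :
    condEntropyOf p (fun ω => ω.1) (fun ω => ω.2) =
      ∑ ω, p ω * (Real.log (∑ a, p (a, ω.2)) - Real.log (p ω)) := by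
  rw [condEntropyOf, entropyOf_eq_neg_sum (P := p), entropyOf_eq_neg_sum
    (P := fun ω => ∑ a, p (a, ω.2))]
  · simp only [mul_sub, Finset.sum_sub_distrib]
    ring
  · rintro ⟨a, b⟩
    simp [Fintype.sum_prod_type]
  · rintro ⟨a, b⟩
    simp

variable {A3 A1 Z : Type*} [Fintype A3] [Fintype A1] [Fintype Z] [DecidableEq A3]
  [DecidableEq A1] [DecidableEq Z]

theorem condMutualInfoOf_superposition {p : A3 → ℝ} {K : A3 → A1 → ℝ} (hK : ∀ x, IsPmf (K x))
    {V : A3 → A1 → Z → ℝ} (hV : ∀ x x1, IsPmf (V x x1))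
    {T : A3 → Z → ℝ} (hT : ∀ x z, T x z = ∑ x1, K x x1 * V x x1 z)
    (hTpos : ∀ x x1 z, K x x1 * V x x1 z ≠ 0 → 0 < T x z) :
    condMutualInfoOf (fun ω : A3 × A1 × Z => p ω.1 * K ω.1 ω.2.1 * V ω.1 ω.2.1 ω.2.2)
      (fun ω => ω.2.1) (fun ω => ω.2.2) (fun ω => ω.1) =
    -∑ ω : A3 × A1 × Z, p ω.1 * K ω.1 ω.2.1 * V ω.1 ω.2.1 ω.2.2 *
      Real.log (T ω.1 ω.2.2 / V ω.1 ω.2.1 ω.2.2) := by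
  rw [condMutualInfoOf, entropyOf_eq_neg_sum (P := fun ω => p ω.1 * K ω.1 ω.2.1),
    entropyOf_eq_neg_sum (P := fun ω => p ω.1 * T ω.1 ω.2.2),
    entropyOf_eq_neg_sum (P := fun ω => p ω.1 * K ω.1 ω.2.1 * V ω.1 ω.2.1 ω.2.2),
    entropyOf_eq_neg_sum (P := fun ω => p ω.1)]
  · rw [← sub_eq_zero]
    simp only [← Finset.sum_neg_distrib, ← Finset.sum_add_distrib, ← Finset.sum_sub_distrib]
    refine Finset.sum_eq_zero fun ω _ => ?_
    by_cases h : p ω.1 * K ω.1 ω.2.1 * V ω.1 ω.2.1 ω.2.2 = 0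
    · simp [h]
    · have hp := left_ne_zero_of_mul (left_ne_zero_of_mul h)
      have hk := right_ne_zero_of_mul (left_ne_zero_of_mul h)
      have hv := right_ne_zero_of_mul h
      have ht := (hTpos _ _ _ (mul_ne_zero hk hv)).ne'
      rw [Real.log_div ht hv, Real.log_mul (mul_ne_zero hp hk) hv, Real.log_mul hp hk,
        Real.log_mul hp ht]
      ring
  · rintro ⟨x, x1, z⟩
    simp [Fintype.sum_prod_type, mul_assoc, ← Finset.mul_sum, (hV _ _).2, (hK _).2]
  · rintro ⟨x, x1, z⟩
    simp [Fintype.sum_prod_type, ite_and]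
  · rintro ⟨x, x1, z⟩
    simp [Fintype.sum_prod_type, ite_and, hT, Finset.mul_sum, mul_assoc]
  · rintro ⟨x, x1, z⟩
    simp [Fintype.sum_prod_type, ite_and, ← Finset.mul_sum, (hV _ _).2]

theorem mutualInfoOf_superposition {p : A3 → ℝ} {K : A3 → A1 → ℝ}
    {V : A3 → A1 → Z → ℝ} (hV : ∀ x x1, IsPmf (V x x1))
    {T : Z → ℝ} (hT : ∀ z, T z = ∑ x, p x * ∑ x1, K x x1 * V x x1 z)
    (hTpos : ∀ x x1 z, p x * (K x x1 * V x x1 z) ≠ 0 → 0 < T z) :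
    mutualInfoOf (fun ω : A3 × A1 × Z => p ω.1 * K ω.1 ω.2.1 * V ω.1 ω.2.1 ω.2.2)
      (fun ω => (ω.2.1, ω.1)) (fun ω => ω.2.2) =
    -∑ ω : A3 × A1 × Z, p ω.1 * K ω.1 ω.2.1 * V ω.1 ω.2.1 ω.2.2 *
      Real.log (T ω.2.2 / V ω.1 ω.2.1 ω.2.2) := by
  rw [mutualInfoOf, entropyOf_eq_neg_sum (P := fun ω => p ω.1 * K ω.1 ω.2.1),
    entropyOf_eq_neg_sum (P := fun ω => T ω.2.2),
    entropyOf_eq_neg_sum (P := fun ω => p ω.1 * K ω.1 ω.2.1 * V ω.1 ω.2.1 ω.2.2)]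
  · rw [← sub_eq_zero]
    simp only [← Finset.sum_neg_distrib, ← Finset.sum_add_distrib, ← Finset.sum_sub_distrib]
    refine Finset.sum_eq_zero fun ω _ => ?_
    by_cases h : p ω.1 * K ω.1 ω.2.1 * V ω.1 ω.2.1 ω.2.2 = 0
    · simp [h]
    · have hpk := left_ne_zero_of_mul h
      have hv := right_ne_zero_of_mul h
      have ht := (hTpos ω.1 ω.2.1 ω.2.2 (by rwa [← mul_assoc])).ne'
      rw [Real.log_div ht hv, Real.log_mul hpk hv]
      ring
  · rintro ⟨x, x1, z⟩
    simp [Fintype.sum_prod_type, ite_and]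
  · rintro ⟨x, x1, z⟩
    simp [Fintype.sum_prod_type, hT, Finset.mul_sum, mul_assoc]
  · rintro ⟨x, x1, z⟩
    simp [Fintype.sum_prod_type, ite_and, ← Finset.mul_sum, (hV _ _).2]

end Entropy

section BlockLaws

variable {A3 A1 Z S U : Type*} [Fintype A3] [Fintype A1] [Fintype Z] [Fintype S] [Fintype U]

theorem sum_pi_prod₃ {ι : Type*} [Fintype ι] [DecidableEq ι] (f : A3 → A1 → Z → ℝ) :
    ∑ x : ι → A3, ∑ x1 : ι → A1, ∑ z : ι → Z, ∏ j, f (x j) (x1 j) (z j) =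
      (∑ x, ∑ x1, ∑ z, f x x1 z) ^ Fintype.card ι := by
  have h : ∀ (x : ι → A3), ∑ x1 : ι → A1, ∑ z : ι → Z, ∏ j, f (x j) (x1 j) (z j) =
      ∏ j, ∑ x1, ∑ z, f (x j) x1 z := fun x => sum_pi_prod₂ fun j => f (x j)
  simp only [h]
  rw [sum_pi_prod fun (_ : ι) x => ∑ x1, ∑ z, f x x1 z]
  simp

theorem sum_source_tilted_pi {P : S → U → ℝ} (hP : ∀ s u, 0 ≤ P s u) {R : U → ℝ}
    (hR : ∀ u, 0 ≤ R u) (t : ℝ) (N : ℕ) :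
    ∑ s : Fin N → S, ∑ u : Fin N → U,
      (∏ j, P (s j) (u j)) * ((∏ j, R (u j)) / ∏ j, P (s j) (u j)) ^ t =
      (∑ s, ∑ u, P s u * (R u / P s u) ^ t) ^ N := by
  have h := sum_pi_prod₂ (ι := Fin N) fun _ s u => P s u * (R u / P s u) ^ t
  simp only [Finset.prod_const, Finset.card_univ, Fintype.card_fin] at h
  rw [← h]
  refine Finset.sum_congr rfl fun s _ => Finset.sum_congr rfl fun u _ => ?_
  rw [Finset.prod_mul_distrib, Real.finsetProd_rpow _ _ fun j _ => div_nonneg (hR _) (hP _ _),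
    Finset.prod_div_distrib]

theorem sum_channel_tilted_pi (p : A3 → ℝ) (K : A3 → A1 → ℝ) {V : A3 → A1 → Z → ℝ}
    (hV : ∀ x x1 z, 0 ≤ V x x1 z) {T : A3 → Z → ℝ} (hT : ∀ x z, 0 ≤ T x z) (t : ℝ) (N : ℕ) :
    ∑ x : Fin N → A3, (∏ j, p (x j)) * ∑ x1 : Fin N → A1, (∏ j, K (x j) (x1 j)) *
      ∑ z : Fin N → Z, (∏ j, V (x j) (x1 j) (z j)) *
        ((∏ j, T (x j) (z j)) / ∏ j, V (x j) (x1 j) (z j)) ^ t =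
      (∑ x, p x * ∑ x1, K x x1 * ∑ z, V x x1 z * (T x z / V x x1 z) ^ t) ^ N := by
  have h := sum_pi_prod₃ (ι := Fin N)
    fun x x1 z => p x * (K x x1 * (V x x1 z * (T x z / V x x1 z) ^ t))
  simp only [Fintype.card_fin] at h
  simp only [Finset.mul_sum] at h ⊢
  rw [← h]
  refine Finset.sum_congr rfl fun x _ => Finset.sum_congr rfl fun x1 _ =>
    Finset.sum_congr rfl fun z _ => ?_
  simp only [Finset.prod_mul_distrib]
  rw [Real.finsetProd_rpow _ _ fun j _ => div_nonneg (hT _ _) (hV _ _ _),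
    Finset.prod_div_distrib]

end BlockLaws

section Assembly

theorem sum_mul_sum_ite_snd {S W U Y Z : Type*} [Fintype S] [Fintype W] [Fintype U] [Fintype Y]
    [Fintype Z] (p : S × W × U → ℝ) (q : S → Y × Z → ℝ) (D : S → U → Z → Prop)
    [∀ s u z, Decidable (D s u z)] :
    ∑ a, p a * ∑ o, (if D a.1 a.2.2 o.2 then q a.1 o else 0) =
      ∑ s, ∑ u, ∑ z, if D s u z then (∑ w, p (s, w, u)) * ∑ y, q s (y, z) else 0 := by
  simp only [Fintype.sum_prod_type]
  refine Finset.sum_congr rfl fun s _ => ?_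
  rw [Finset.sum_comm]
  refine Finset.sum_congr rfl fun u _ => ?_
  change ∑ w, p (s, w, u) * ∑ y, ∑ z, (if D s u z then q s (y, z) else 0) = _
  rw [← Finset.sum_mul, Finset.sum_comm, Finset.mul_sum]
  refine Finset.sum_congr rfl fun z _ => ?_
  split_ifs <;> simp

theorem sum_mul_sum_ite_fst {S W U Y Z : Type*} [Fintype S] [Fintype W] [Fintype U] [Fintype Y]
    [Fintype Z] (p : S × W × U → ℝ) (q : S → Y × Z → ℝ) (D : S → W → Y → Prop)
    [∀ s u z, Decidable (D s u z)] :
    ∑ a, p a * ∑ o, (if D a.1 a.2.1 o.1 then q a.1 o else 0) =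
      ∑ s, ∑ w, ∑ y, if D s w y then (∑ u, p (s, w, u)) * ∑ z, q s (y, z) else 0 := by
  simp only [Fintype.sum_prod_type]
  refine Finset.sum_congr rfl fun s _ => Finset.sum_congr rfl fun w _ => ?_
  change ∑ u, p (s, w, u) * ∑ y, ∑ z, (if D s w y then q s (y, z) else 0) = _
  rw [← Finset.sum_mul, Finset.mul_sum]
  refine Finset.sum_congr rfl fun y _ => ?_
  split_ifs <;> simp

variable {S1 W W3 X1 X3 Y Y3 : Type*}
    [Fintype S1] [Fintype W] [Fintype W3] [Fintype X1] [Fintype X3] [Fintype Y] [Fintype Y3]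
    [DecidableEq S1]

/-- Random-coding existence of a block-Markov superposition code. -/
theorem exists_superposition_code
    {pSrc : S1 × W × W3 → ℝ} (hSrc : IsPmf pSrc)
    {Q : X1 × X3 → Y × Y3 → ℝ} (hQ : ∀ x, IsPmf (Q x))
    {p : X3 → ℝ} (hp : IsPmf p) {K : X3 → X1 → ℝ} (hK : ∀ x, IsPmf (K x))
    {P3 : S1 → W3 → ℝ} (hP3 : ∀ s u, P3 s u = ∑ w, pSrc (s, w, u))
    {P : S1 → W → ℝ} (hP : ∀ s w, P s w = ∑ u, pSrc (s, w, u))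
    {R3 : W3 → ℝ} (hR3 : ∀ u, R3 u = ∑ s, P3 s u) {R : W → ℝ} (hR : ∀ w, R w = ∑ s, P s w)
    {V3 : X3 → X1 → Y3 → ℝ} (hV3 : ∀ x x1 z, V3 x x1 z = ∑ y, Q (x1, x) (y, z))
    {V : X3 → X1 → Y → ℝ} (hV : ∀ x x1 y, V x x1 y = ∑ z, Q (x1, x) (y, z))
    {T3 : X3 → Y3 → ℝ} (hT3 : ∀ x z, T3 x z = ∑ x1, K x x1 * V3 x x1 z)
    {T : Y → ℝ} (hT : ∀ y, T y = ∑ x, p x * ∑ x1, K x x1 * V x x1 y)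
    {n B Ns Nc : ℕ} (eS : Fin B × Fin Ns ≃ Fin n) (eC : Fin (B + 1) × Fin Nc ≃ Fin n)
    (hmono : ∀ b j b' j', b < b' → eC (b, j) < eC (b', j'))
    {τ3 τ t3 t : ℝ} (hτ3 : 0 < τ3) (hτ : 0 < τ) (ht3 : 0 ≤ t3) (ht : 0 ≤ t) :
    ∃ (f1 : (Fin n → S1) → Fin n → X1)
      (f3 : Fin n → (Fin n → Y3) → (Fin n → W3) → X3)
      (g3 : (Fin n → Y3) → (Fin n → W3) → Fin n → S1)
      (g : (Fin n → Y) → (Fin n → W) → Fin n → S1), CausalRelay f3 ∧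
      crbcErrProb pSrc Q n f1 f3 g3 g ≤ B *
        ((τ3 ^ t3 * (∑ s, ∑ u, P3 s u * (R3 u / P3 s u) ^ t3) ^ Ns *
          (∑ x, p x * ∑ x1, K x x1 * ∑ z, V3 x x1 z * (T3 x z / V3 x x1 z) ^ t3) ^ Nc + 1 / τ3) +
        (τ ^ t * (∑ s, ∑ w, P s w * (R w / P s w) ^ t) ^ Ns *
          (∑ x, p x * ∑ x1, K x x1 * ∑ y, V x x1 y * (T y / V x x1 y) ^ t) ^ Nc + 1 / τ)) := by
  obtain ⟨⟨s00, -, -⟩⟩ : Nonempty (S1 × W × W3) := by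
    by_contra h
    rw [not_nonempty_iff] at h
    simpa using hSrc.2
  have : Nonempty S1 := ⟨s00⟩
  obtain ⟨x30⟩ : Nonempty X3 := by
    by_contra h
    rw [not_nonempty_iff] at h
    simpa using hp.2
  obtain ⟨x10⟩ : Nonempty X1 := by
    by_contra h
    rw [not_nonempty_iff] at h
    simpa using (hK x30).2
  have : Nonempty (Y × Y3) := by
    by_contra h
    rw [not_nonempty_iff] at h
    simpa using (hQ (x10, x30)).2
  have hP30 : ∀ s u, 0 ≤ P3 s u := fun s u => by
    rw [hP3]; exact Finset.sum_nonneg fun _ _ => hSrc.1 _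
  have hP0 : ∀ s u, 0 ≤ P s u := fun s u => by
    rw [hP]; exact Finset.sum_nonneg fun _ _ => hSrc.1 _
  have hP31 : ∑ s, ∑ u, P3 s u = 1 := by
    have := hSrc.2
    simp only [Fintype.sum_prod_type] at this
    simp only [hP3, ← this]
    exact Finset.sum_congr rfl fun s _ => Finset.sum_comm
  have hP1 : ∑ s, ∑ u, P s u = 1 := by
    have := hSrc.2
    simp only [Fintype.sum_prod_type] at this
    simp only [hP, ← this]
  have hR30 : ∀ u, 0 ≤ R3 u := fun u => by
    rw [hR3]; exact Finset.sum_nonneg fun _ _ => hP30 _ _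
  have hR0 : ∀ u, 0 ≤ R u := fun u => by
    rw [hR]; exact Finset.sum_nonneg fun _ _ => hP0 _ _
  have hV3p : ∀ x x1, IsPmf (V3 x x1) := fun x x1 => by
    rw [show V3 x x1 = _ from funext (hV3 x x1)]
    exact (hQ _).marginal_snd
  have hVp : ∀ x x1, IsPmf (V x x1) := fun x x1 => by
    rw [show V x x1 = _ from funext (hV x x1)]
    exact (hQ _).marginal_fst
  have hT30 : ∀ x z, 0 ≤ T3 x z := fun x z => by
    rw [hT3]; exact Finset.sum_nonneg fun _ _ => mul_nonneg ((hK _).1 _) ((hV3p _ _).1 _)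
  have hT0 : ∀ z, 0 ≤ T z := fun z => by
    rw [hT]; exact Finset.sum_nonneg fun _ _ => mul_nonneg (hp.1 _)
      (Finset.sum_nonneg fun _ _ => mul_nonneg ((hK _).1 _) ((hVp _ _).1 _))
  -- block laws
  let pB : (Fin Nc → X3) → ℝ := fun x => ∏ j, p (x j)
  let KB : (Fin Nc → X3) → (Fin Nc → X1) → ℝ := fun x x1 => ∏ j, K (x j) (x1 j)
  let V3B : (Fin Nc → X3) → (Fin Nc → X1) → (Fin Nc → Y3) → ℝ :=
    fun x x1 z => ∏ j, V3 (x j) (x1 j) (z j)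
  let VB : (Fin Nc → X3) → (Fin Nc → X1) → (Fin Nc → Y) → ℝ :=
    fun x x1 z => ∏ j, V (x j) (x1 j) (z j)
  let T3B : (Fin Nc → X3) → (Fin Nc → Y3) → ℝ := fun x z => ∏ j, T3 (x j) (z j)
  let TB : (Fin Nc → Y) → ℝ := fun z => ∏ j, T (z j)
  let P3B : (Fin Ns → S1) → (Fin Ns → W3) → ℝ := fun s u => ∏ j, P3 (s j) (u j)
  let PB : (Fin Ns → S1) → (Fin Ns → W) → ℝ := fun s u => ∏ j, P (s j) (u j)
  let R3B : (Fin Ns → W3) → ℝ := fun u => ∏ j, R3 (u j)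
  let RB : (Fin Ns → W) → ℝ := fun u => ∏ j, R (u j)
  have hpB : IsPmf pB := isPmf_pi fun _ => hp
  have hKB : ∀ x, IsPmf (KB x) := fun x => isPmf_pi fun j => hK (x j)
  have hV3B : ∀ x x1, IsPmf (V3B x x1) := fun x x1 => isPmf_pi fun j => hV3p (x j) (x1 j)
  have hVB : ∀ x x1, IsPmf (VB x x1) := fun x x1 => isPmf_pi fun j => hVp (x j) (x1 j)
  have hT3B : ∀ x z, T3B x z = ∑ x1, KB x x1 * V3B x x1 z := fun x z => by
    simp only [T3B, KB, V3B, ← Finset.prod_mul_distrib, hT3]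
    exact (sum_pi_prod fun j x1 => K (x j) x1 * V3 (x j) x1 (z j)).symm
  have hTB : ∀ z, TB z = ∑ x, pB x * ∑ x1, KB x x1 * VB x x1 z := fun z => by
    simp only [TB, pB, KB, VB, ← Finset.prod_mul_distrib, Finset.mul_sum, hT]
    exact (sum_pi_prod₂ fun j x x1 => p x * (K x x1 * V x x1 (z j))).symm
  have hP3B0 : ∀ s u, 0 ≤ P3B s u := fun s u => Finset.prod_nonneg fun _ _ => hP30 _ _
  have hPB0 : ∀ s u, 0 ≤ PB s u := fun s u => Finset.prod_nonneg fun _ _ => hP0 _ _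
  have hP3B1 : ∑ s, ∑ u, P3B s u = 1 := by
    simp only [P3B, sum_pi_prod₂ fun _ => P3, hP31, Finset.prod_const_one]
  have hPB1 : ∑ s, ∑ u, PB s u = 1 := by
    simp only [PB, sum_pi_prod₂ fun _ => P, hP1, Finset.prod_const_one]
  have hR3B : ∀ u, R3B u = ∑ s, P3B s u := fun u => by
    simp only [R3B, P3B, hR3]
    exact (sum_pi_prod fun j s => P3 s (u j)).symm
  have hRB : ∀ u, RB u = ∑ s, PB s u := fun u => by
    simp only [RB, PB, hR]
    exact (sum_pi_prod fun j s => P s (u j)).symm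
  let pD : (Fin Ns → S1) × (Fin Ns → W) × (Fin Ns → W3) → ℝ :=
    fun a => ∏ j, pSrc (a.1 j, a.2.1 j, a.2.2 j)
  have hpD : IsPmf pD := by
    refine ⟨fun _ => Finset.prod_nonneg fun _ _ => hSrc.1 _, ?_⟩
    rw [← sum_source_prod hSrc Ns]
    simp only [Fintype.sum_prod_type, pD]
  let QB : (Fin Nc → X3) → (Fin Nc → X1) → (Fin Nc → Y) × (Fin Nc → Y3) → ℝ :=
    fun x x1 o => ∏ j, Q (x1 j, x j) (o.1 j, o.2 j)
  have hQB : ∀ x x1, IsPmf (QB x x1) := fun x x1 => by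
    refine ⟨fun _ => Finset.prod_nonneg fun _ _ => (hQ _).1 _, ?_⟩
    simp only [Fintype.sum_prod_type, QB]
    rw [sum_arrow_prod fun (y : Fin Nc → Y) (z : Fin Nc → Y3) =>
      ∏ j, Q (x1 j, x j) (y j, z j)]
    exact sum_pi_prod_eq_one (p := fun j => Q (x1 j, x j)) fun _ => (hQ _).2
  have hpD3 : ∀ s u, ∑ w, pD (s, w, u) = P3B s u := fun s u => by
    simp only [P3B, hP3]
    exact sum_pi_prod fun j w => pSrc (s j, w, u j)
  have hpDd : ∀ s w, ∑ u, pD (s, w, u) = PB s w := fun s w => by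
    simp only [PB, hP]
    exact sum_pi_prod fun j u => pSrc (s j, w j, u)
  have hQB3 : ∀ x x1 z, ∑ y, QB x x1 (y, z) = V3B x x1 z := fun x x1 z => by
    simp only [V3B, hV3]
    exact sum_pi_prod fun j y => Q (x1 j, x j) (y, z j)
  have hQBd : ∀ x x1 y, ∑ z, QB x x1 (y, z) = VB x x1 y := fun x x1 y => by
    simp only [VB, hV]
    exact sum_pi_prod fun j z => Q (x1 j, x j) (y j, z)
  let d3 := fun (C : (Fin Ns → S1) → (Fin Nc → X3) × ((Fin Ns → S1) → Fin Nc → X1)) s' z u =>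
    thresholdDecode (fun s => P3B s u * V3B (C s').1 ((C s').2 s) z)
      (τ3 * (T3B (C s').1 z * R3B u))
  let d := fun (C : (Fin Ns → S1) → (Fin Nc → X3) × ((Fin Ns → S1) → Fin Nc → X1)) r z u =>
    thresholdDecode (fun s => PB s u * VB (C s).1 ((C s).2 r) z) (τ * (TB z * RB u))
  let L3 := fun (C : (Fin Ns → S1) → (Fin Nc → X3) × ((Fin Ns → S1) → Fin Nc → X1)) s' =>
    ∑ a, pD a * ∑ o, if d3 C s' o.2 a.2.2 ≠ a.1 then QB (C s').1 ((C s').2 a.1) o else 0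
  let L := fun (C : (Fin Ns → S1) → (Fin Nc → X3) × ((Fin Ns → S1) → Fin Nc → X1)) r =>
    ∑ a, pD a * ∑ o, if d C r o.1 a.2.1 ≠ a.1 then QB (C a.1).1 ((C a.1).2 r) o else 0
  have hL3 := fun s' => satellite_random_coding hpB hKB hV3B hT3B hP3B0 hP3B1 hR3B hτ3 ht3 s'
  have hL := fun r => cloud_random_coding hpB hKB hVB hTB hPB0 hPB1 hRB hτ ht r
  rw [sum_source_tilted_pi hP30 hR30, sum_channel_tilted_pi p K (fun x x1 => (hV3p x x1).1) hT30]
    at hL3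
  rw [sum_source_tilted_pi hP0 hR0,
    sum_channel_tilted_pi p K (fun x x1 => (hVp x x1).1) (fun _ => hT0)] at hL
  set ε3 := τ3 ^ t3 * (∑ s, ∑ u, P3 s u * (R3 u / P3 s u) ^ t3) ^ Ns *
    (∑ x, p x * ∑ x1, K x x1 * ∑ z, V3 x x1 z * (T3 x z / V3 x x1 z) ^ t3) ^ Nc + 1 / τ3
  set ε := τ ^ t * (∑ s, ∑ w, P s w * (R w / P s w) ^ t) ^ Ns *
    (∑ x, p x * ∑ x1, K x x1 * ∑ y, V x x1 y * (T y / V x x1 y) ^ t) ^ Nc + 1 / τ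
  have hL3' : ∀ s', ∑ C, (∏ i, cloudPmf (Fin Ns → S1) pB KB (C i)) * L3 C s' ≤ ε3 := by
    intro s'
    refine le_trans (le_of_eq ?_) (hL3 s')
    refine Finset.sum_congr rfl fun C _ => ?_
    congr 1
    refine (sum_mul_sum_ite_snd pD (fun s o => QB (C s').1 ((C s').2 s) o)
      (fun s u z => d3 C s' z u ≠ s)).trans ?_
    simp only [hpD3, hQB3, d3]
  have hL' : ∀ r, ∑ C, (∏ i, cloudPmf (Fin Ns → S1) pB KB (C i)) * L C r ≤ ε := by
    intro r
    refine le_trans (le_of_eq ?_) (hL r)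
    refine Finset.sum_congr rfl fun C _ => ?_
    congr 1
    refine (sum_mul_sum_ite_fst pD (fun s o => QB (C s).1 ((C s).2 r) o)
      (fun s u z => d C r z u ≠ s)).trans ?_
    simp only [hpDd, hQBd, d]
  let s0 : Fin Ns → S1 := fun _ => s00
  have hpi : ∀ z : Fin B → (Fin Ns → S1) × (Fin Ns → W) × (Fin Ns → W3), 0 ≤ ∏ b, pD (z b) :=
    fun z => Finset.prod_nonneg fun _ _ => hpD.1 _
  have havg : ∑ C, (∏ i, cloudPmf (Fin Ns → S1) pB KB (C i)) *
      (∑ b : Fin B, ∑ z : Fin B → (Fin Ns → S1) × (Fin Ns → W) × (Fin Ns → W3),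
        (∏ b, pD (z b)) * (L3 C (oldMsg s0 (fun i => (z i).1) b.castSucc) +
          L C (newMsg s0 (fun i => (z i).1) b.succ))) ≤ B * (ε3 + ε) := by
    calc _ = ∑ b : Fin B, ∑ z : Fin B → (Fin Ns → S1) × (Fin Ns → W) × (Fin Ns → W3),
          (∏ b, pD (z b)) *
          (∑ C, (∏ i, cloudPmf (Fin Ns → S1) pB KB (C i)) *
              L3 C (oldMsg s0 (fun i => (z i).1) b.castSucc) +
            ∑ C, (∏ i, cloudPmf (Fin Ns → S1) pB KB (C i)) *
              L C (newMsg s0 (fun i => (z i).1) b.succ)) := by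
          simp only [Finset.mul_sum]
          rw [Finset.sum_comm]
          refine Finset.sum_congr rfl fun b _ => ?_
          rw [Finset.sum_comm]
          refine Finset.sum_congr rfl fun z _ => ?_
          rw [← Finset.sum_add_distrib, Finset.mul_sum]
          refine Finset.sum_congr rfl fun C _ => ?_
          ring
      _ ≤ ∑ b : Fin B, ∑ z : Fin B → (Fin Ns → S1) × (Fin Ns → W) × (Fin Ns → W3),
          (∏ b, pD (z b)) * (ε3 + ε) :=
        Finset.sum_le_sum fun b _ => Finset.sum_le_sum fun z _ =>
          mul_le_mul_of_nonneg_left (add_le_add (hL3' _) (hL' _)) (hpi z)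
      _ = B * (ε3 + ε) := by
        simp only [← Finset.sum_mul, sum_pi_prod_eq_one (p := fun _ : Fin B => pD) fun _ => hpD.2]
        simp
  obtain ⟨C, hC⟩ := exists_le_of_sum_pmf_mul_le
    (isPmf_pi fun _ => isPmf_cloudPmf (M := Fin Ns → S1) hpB hKB) havg
  obtain ⟨f1, f3, g3, g, hc, hle⟩ := exists_blockMarkov_code hSrc hQ eS eC hmono
    (fun s s' => (C s').2 s) (fun s' => (C s').1) (d3 C) (d C) s0
  refine ⟨f1, f3, g3, g, hc, hle.trans ((blockMarkov_union_bound (B := B) hpD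
    (Q := fun s s' => QB (C s').1 ((C s').2 s)) (fun _ _ => hQB _ _) s0 (d3 C) (d C)).trans hC)⟩

end Assembly

section SingleLetter

theorem hasDerivAt_source_tilted {S U : Type*} [Fintype S] [Fintype U] [DecidableEq S]
    [DecidableEq U] {P : S → U → ℝ} (hP : ∀ s u, 0 ≤ P s u) {R : U → ℝ}
    (hR : ∀ u, R u = ∑ s, P s u) :
    HasDerivAt (fun t : ℝ => ∑ s, ∑ u, P s u * (R u / P s u) ^ t)
      (condEntropyOf (fun ω : S × U => P ω.1 ω.2) (fun ω => ω.1) (fun ω => ω.2)) 0 := by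
  have hpos : ∀ s u, P s u ≠ 0 → 0 < P s u ∧ 0 < R u := fun s u h => by
    have h0 := (hP s u).lt_of_ne' h
    refine ⟨h0, h0.trans_le ?_⟩
    rw [hR]
    exact Finset.single_le_sum (f := fun s => P s u) (fun i _ => hP i u) (Finset.mem_univ s)
  have h := hasDerivAt_sum_mul_rpow (μ := fun ω : S × U => P ω.1 ω.2)
    (r := fun ω => R ω.2 / P ω.1 ω.2) fun ω hω => div_pos (hpos _ _ hω).2 (hpos _ _ hω).1
  rw [condEntropyOf_fst_snd]
  simp only [Fintype.sum_prod_type] at h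
  refine h.congr_deriv ?_
  rw [Fintype.sum_prod_type]
  refine Finset.sum_congr rfl fun s _ => Finset.sum_congr rfl fun u _ => ?_
  by_cases h0 : P s u = 0
  · simp [h0]
  · simp only [← hR]
    rw [Real.log_div (hpos _ _ h0).2.ne' h0]

theorem hasDerivAt_channel_tilted {A3 A1 Z : Type*} [Fintype A3] [Fintype A1] [Fintype Z]
    {p : A3 → ℝ} {K : A3 → A1 → ℝ} {V : A3 → A1 → Z → ℝ} {T : A3 → Z → ℝ}
    (h : ∀ x x1 z, p x * K x x1 * V x x1 z ≠ 0 → 0 < T x z / V x x1 z) :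
    HasDerivAt (fun t : ℝ => ∑ x, p x * ∑ x1, K x x1 * ∑ z, V x x1 z * (T x z / V x x1 z) ^ t)
      (- -∑ ω : A3 × A1 × Z, p ω.1 * K ω.1 ω.2.1 * V ω.1 ω.2.1 ω.2.2 *
        Real.log (T ω.1 ω.2.2 / V ω.1 ω.2.1 ω.2.2)) 0 := by
  rw [neg_neg]
  have h' := hasDerivAt_sum_mul_rpow
    (μ := fun ω : A3 × A1 × Z => p ω.1 * K ω.1 ω.2.1 * V ω.1 ω.2.1 ω.2.2)
    (r := fun ω => T ω.1 ω.2.2 / V ω.1 ω.2.1 ω.2.2) fun ω hω => h _ _ _ hω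
  refine h'.congr_of_eventuallyEq (Filter.Eventually.of_forall fun t => ?_)
  simp only [Fintype.sum_prod_type, Finset.mul_sum, mul_assoc]

open Filter Topology in
theorem exists_superposition_exponent {S U A3 A1 Z : Type*} [Fintype S] [Fintype U]
    [DecidableEq S] [DecidableEq U] [Fintype A3] [Fintype A1] [Fintype Z]
    {P : S → U → ℝ} (hP : ∀ s u, 0 ≤ P s u) (hP1 : ∑ s, ∑ u, P s u = 1)
    {R : U → ℝ} (hR : ∀ u, R u = ∑ s, P s u)
    {p : A3 → ℝ} (hp : IsPmf p) {K : A3 → A1 → ℝ} (hK : ∀ x, IsPmf (K x))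
    {V : A3 → A1 → Z → ℝ} (hV : ∀ x x1, IsPmf (V x x1)) {T : A3 → Z → ℝ}
    (hT0 : ∀ x z, 0 ≤ T x z) (hT : ∀ x x1 z, p x * K x x1 * V x x1 z ≠ 0 → 0 < T x z)
    {B : ℕ} (hB : (B + 1 : ℝ) *
        condEntropyOf (fun ω : S × U => P ω.1 ω.2) (fun ω => ω.1) (fun ω => ω.2) <
      B * -∑ ω : A3 × A1 × Z, p ω.1 * K ω.1 ω.2.1 * V ω.1 ω.2.1 ω.2.2 *
        Real.log (T ω.1 ω.2.2 / V ω.1 ω.2.1 ω.2.2)) :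
    ∃ γ t : ℝ, 0 < t ∧ Tendsto (fun m : ℕ => Real.exp (γ * m) ^ t *
      (∑ s, ∑ u, P s u * (R u / P s u) ^ t) ^ ((B + 1) * m) *
      (∑ x, p x * ∑ x1, K x x1 * ∑ z, V x x1 z * (T x z / V x x1 z) ^ t) ^ (B * m) +
        1 / Real.exp (γ * m)) atTop (𝓝 0) := by
  have hR0 : ∀ u, 0 ≤ R u := fun u => by rw [hR]; exact Finset.sum_nonneg fun _ _ => hP _ _
  have ha := hasDerivAt_source_tilted hP hR
  have hc := hasDerivAt_channel_tilted (p := p) (K := K) (V := V) (T := T)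
    fun x x1 z hne => div_pos (hT x x1 z hne)
      (((hV x x1).1 z).lt_of_ne' (right_ne_zero_of_mul hne))
  refine exists_exponent (a := fun t => ∑ s, ∑ u, P s u * (R u / P s u) ^ t)
    (c := fun t => ∑ x, p x * ∑ x1, K x x1 * ∑ z, V x x1 z * (T x z / V x x1 z) ^ t)
    ?_ ?_ ?_ ?_ ha hc hB
  · simpa using hP1
  · simp [(hV _ _).2, (hK _).2, hp.2]
  · exact fun t => Finset.sum_nonneg fun s _ => Finset.sum_nonneg fun u _ =>
      mul_nonneg (hP s u) (Real.rpow_nonneg (div_nonneg (hR0 u) (hP s u)) t)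
  · exact fun t => Finset.sum_nonneg fun x _ => mul_nonneg (hp.1 x)
      (Finset.sum_nonneg fun x1 _ => mul_nonneg ((hK x).1 x1) (Finset.sum_nonneg fun z _ =>
        mul_nonneg ((hV x x1).1 z) (Real.rpow_nonneg (div_nonneg (hT0 x z) ((hV x x1).1 z)) t)))

theorem exists_kernel {A1 A3 : Type*} [Fintype A1] [Fintype A3] {q : A1 × A3 → ℝ}
    (hq : IsPmf q) : ∃ (p : A3 → ℝ) (K : A3 → A1 → ℝ), IsPmf p ∧ (∀ x, IsPmf (K x)) ∧
      ∀ x1 x, q (x1, x) = p x * K x x1 := by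
  classical
  have h1 : ∑ x1, ∑ x, q (x1, x) = 1 := by rw [← Fintype.sum_prod_type, hq.2]
  refine ⟨fun x => ∑ x1, q (x1, x), fun x x1 => if ∑ x1, q (x1, x) = 0 then ∑ x', q (x1, x')
    else q (x1, x) / ∑ x1, q (x1, x), ⟨fun x => Finset.sum_nonneg fun _ _ => hq.1 _, ?_⟩,
    fun x => ?_, fun x1 x => ?_⟩
  · rw [Finset.sum_comm, h1]
  · by_cases h : ∑ x1, q (x1, x) = 0
    · simp only [h, if_true]
      exact ⟨fun _ => Finset.sum_nonneg fun _ _ => hq.1 _, h1⟩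
    · simp only [h, if_false]
      refine ⟨fun _ => div_nonneg (hq.1 _) (Finset.sum_nonneg fun _ _ => hq.1 _), ?_⟩
      rw [← Finset.sum_div, div_self h]
  · by_cases h : ∑ x1, q (x1, x) = 0
    · simp only [h, zero_mul]
      exact (Finset.sum_eq_zero_iff_of_nonneg fun _ _ => hq.1 _).1 h x1 (Finset.mem_univ _)
    · simp only [h, if_false]
      field_simp

variable {S1 W W3 X1 X3 Y Y3 : Type*}
    [Fintype S1] [Fintype W] [Fintype W3] [Fintype X1] [Fintype X3] [Fintype Y] [Fintype Y3]

theorem sum_crbcSepJoint_mul (pSrc : S1 × W × W3 → ℝ) (Q : X1 × X3 → Y × Y3 → ℝ)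
    (pX : X1 × X3 → ℝ) (F : S1 × W3 × W → ℝ) (G : X1 × X3 × Y3 × Y → ℝ) :
    ∑ ω, crbcSepJoint pSrc Q pX ω * (F (ω.1, ω.2.1, ω.2.2.1) * G ω.2.2.2) =
      (∑ s, ∑ w3, ∑ w, pSrc (s, w, w3) * F (s, w3, w)) *
        ∑ x1, ∑ x3, ∑ y3, ∑ y, pX (x1, x3) * Q (x1, x3) (y, y3) * G (x1, x3, y3, y) := by
  simp only [Fintype.sum_prod_type, crbcSepJoint]
  simp only [Finset.sum_mul]
  refine Finset.sum_congr rfl fun s _ => Finset.sum_congr rfl fun w3 _ =>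
    Finset.sum_congr rfl fun w _ => ?_
  simp only [Finset.mul_sum]
  refine Finset.sum_congr rfl fun x1 _ => Finset.sum_congr rfl fun x3 _ =>
    Finset.sum_congr rfl fun y3 _ => Finset.sum_congr rfl fun y _ => ?_
  ring

theorem sum_crbcSepJoint_source {pSrc : S1 × W × W3 → ℝ} {Q : X1 × X3 → Y × Y3 → ℝ}
    (hQ : ∀ x, IsPmf (Q x)) {pX : X1 × X3 → ℝ} (hX : IsPmf pX) (F : S1 × W3 × W → ℝ) :
    ∑ ω, crbcSepJoint pSrc Q pX ω * F (ω.1, ω.2.1, ω.2.2.1) =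
      ∑ s, ∑ w3, ∑ w, pSrc (s, w, w3) * F (s, w3, w) := by
  have h := sum_crbcSepJoint_mul pSrc Q pX F fun _ => 1
  have h1 : ∑ x1, ∑ x3, ∑ y3, ∑ y, pX (x1, x3) * Q (x1, x3) (y, y3) = 1 := by
    rw [← hX.2, Fintype.sum_prod_type]
    refine Finset.sum_congr rfl fun x1 _ => Finset.sum_congr rfl fun x3 _ => ?_
    have := (hQ (x1, x3)).2
    rw [Fintype.sum_prod_type, Finset.sum_comm] at this
    simp only [← Finset.mul_sum, this, mul_one]
  simpa only [mul_one, h1] using h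

theorem sum_crbcSepJoint_channel {pSrc : S1 × W × W3 → ℝ} (hSrc : IsPmf pSrc)
    (Q : X1 × X3 → Y × Y3 → ℝ) (pX : X1 × X3 → ℝ) (G : X1 × X3 × Y3 × Y → ℝ) :
    ∑ ω, crbcSepJoint pSrc Q pX ω * G ω.2.2.2 =
      ∑ x1, ∑ x3, ∑ y3, ∑ y, pX (x1, x3) * Q (x1, x3) (y, y3) * G (x1, x3, y3, y) := by
  have h := sum_crbcSepJoint_mul pSrc Q pX (fun _ => 1) G
  have h1 : ∑ s, ∑ w3, ∑ w, pSrc (s, w, w3) = 1 := by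
    rw [← hSrc.2, Fintype.sum_prod_type]
    refine Finset.sum_congr rfl fun s _ => ?_
    rw [Fintype.sum_prod_type, Finset.sum_comm]
  simpa only [mul_one, one_mul, h1] using h

end SingleLetter

theorem exists_nat_mul_lt {H I H2 I2 : ℝ} (h : H < I) (h2 : H2 < I2) :
    ∃ B : ℕ, 0 < B ∧ (B + 1 : ℝ) * H < B * I ∧ (B + 1 : ℝ) * H2 < B * I2 := by
  obtain ⟨B1, hB1⟩ := exists_nat_gt (H / (I - H))
  obtain ⟨B2, hB2⟩ := exists_nat_gt (H2 / (I2 - H2))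
  rw [div_lt_iff₀ (by linarith)] at hB1 hB2
  refine ⟨B1 + B2 + 1, by omega, ?_, ?_⟩
  · push_cast
    nlinarith [mul_nonneg (Nat.cast_nonneg (α := ℝ) B2) (sub_pos.2 h).le]
  · push_cast
    nlinarith [mul_nonneg (Nat.cast_nonneg (α := ℝ) B1) (sub_pos.2 h2).le]

/-- **Proposition A.1, achievability part** (optimal source-channel code for the CRBC):
if there is an input pmf `p(x1,x3)`, independent of the source, with
`H(S1|W3) < I(X1;Y3|X3)` and `H(S1|W) < I(X1,X3;Y)`, then the source can be reliably
transmitted over the DM CRBC. -/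
theorem crbc_optimal_achievability
    {S1 W W3 X1 X3 Y Y3 : Type*}
    [Fintype S1] [Fintype W] [Fintype W3] [Fintype X1] [Fintype X3] [Fintype Y] [Fintype Y3]
    [DecidableEq S1] [DecidableEq W] [DecidableEq W3]
    [DecidableEq X1] [DecidableEq X3] [DecidableEq Y] [DecidableEq Y3]
    (pSrc : S1 × W × W3 → ℝ) (hSrc : IsPmf pSrc)
    (Q : X1 × X3 → Y × Y3 → ℝ) (hQ : ∀ x, IsPmf (Q x))
    (h : ∃ pX : X1 × X3 → ℝ, IsPmf pX ∧
        (let μ := crbcSepJoint pSrc Q pX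
        -- H(S1|W3) < I(X1;Y3|X3)
        (condEntropyOf μ (fun (s1,_,_,_,_,_,_) => s1) (fun (_,w3,_,_,_,_,_) => w3) <
          condMutualInfoOf μ (fun (_,_,_,x1,_,_,_) => x1)
            (fun (_,_,_,_,_,y3,_) => y3) (fun (_,_,_,_,x3,_,_) => x3)) ∧
        -- H(S1|W) < I(X1,X3;Y)
        (condEntropyOf μ (fun (s1,_,_,_,_,_,_) => s1) (fun (_,_,w,_,_,_,_) => w) <
          mutualInfoOf μ (fun (_,_,_,x1,x3,_,_) => (x1, x3))
            (fun (_,_,_,_,_,_,y) => y)))) :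
    CrbcReliablyTransmitted pSrc Q := by
  obtain ⟨pX, hX, hrelay, hdest⟩ := h
  obtain ⟨p, K, hp, hK, hpK⟩ := exists_kernel hX
  obtain ⟨P3, hP3⟩ : ∃ P3 : S1 → W3 → ℝ, ∀ s u, P3 s u = ∑ w, pSrc (s, w, u) :=
    ⟨_, fun _ _ => rfl⟩
  obtain ⟨P, hP⟩ : ∃ P : S1 → W → ℝ, ∀ s w, P s w = ∑ u, pSrc (s, w, u) := ⟨_, fun _ _ => rfl⟩
  obtain ⟨R3, hR3⟩ : ∃ R3 : W3 → ℝ, ∀ u, R3 u = ∑ s, P3 s u := ⟨_, fun _ => rfl⟩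
  obtain ⟨R, hR⟩ : ∃ R : W → ℝ, ∀ w, R w = ∑ s, P s w := ⟨_, fun _ => rfl⟩
  obtain ⟨V3, hV3⟩ : ∃ V3 : X3 → X1 → Y3 → ℝ, ∀ x x1 z, V3 x x1 z = ∑ y, Q (x1, x) (y, z) :=
    ⟨_, fun _ _ _ => rfl⟩
  obtain ⟨V, hV⟩ : ∃ V : X3 → X1 → Y → ℝ, ∀ x x1 y, V x x1 y = ∑ z, Q (x1, x) (y, z) :=
    ⟨_, fun _ _ _ => rfl⟩
  obtain ⟨T3, hT3⟩ : ∃ T3 : X3 → Y3 → ℝ, ∀ x z, T3 x z = ∑ x1, K x x1 * V3 x x1 z :=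
    ⟨_, fun _ _ => rfl⟩
  obtain ⟨T, hT⟩ : ∃ T : Y → ℝ, ∀ y, T y = ∑ x, p x * ∑ x1, K x x1 * V x x1 y :=
    ⟨_, fun _ => rfl⟩
  have hP30 : ∀ s u, 0 ≤ P3 s u := fun s u => by
    rw [hP3]; exact Finset.sum_nonneg fun _ _ => hSrc.1 _
  have hP0 : ∀ s u, 0 ≤ P s u := fun s u => by
    rw [hP]; exact Finset.sum_nonneg fun _ _ => hSrc.1 _
  have hP31 : ∑ s, ∑ u, P3 s u = 1 := by
    have := hSrc.2
    simp only [Fintype.sum_prod_type] at this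
    simp only [hP3, ← this]
    exact Finset.sum_congr rfl fun s _ => Finset.sum_comm
  have hP1 : ∑ s, ∑ u, P s u = 1 := by
    have := hSrc.2
    simp only [Fintype.sum_prod_type] at this
    simp only [hP, ← this]
  have hV3p : ∀ x x1, IsPmf (V3 x x1) := fun x x1 => by
    rw [show V3 x x1 = _ from funext (hV3 x x1)]
    exact (hQ _).marginal_snd
  have hVp : ∀ x x1, IsPmf (V x x1) := fun x x1 => by
    rw [show V x x1 = _ from funext (hV x x1)]
    exact (hQ _).marginal_fst
  have hKV30 : ∀ x x1 z, 0 ≤ K x x1 * V3 x x1 z := fun x x1 z =>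
    mul_nonneg ((hK _).1 _) ((hV3p _ _).1 _)
  have hKV0 : ∀ x x1 z, 0 ≤ K x x1 * V x x1 z := fun x x1 z =>
    mul_nonneg ((hK _).1 _) ((hVp _ _).1 _)
  have hT3pos : ∀ x x1 z, K x x1 * V3 x x1 z ≠ 0 → 0 < T3 x z := fun x x1 z hne => by
    rw [hT3]
    exact ((hKV30 x x1 z).lt_of_ne' hne).trans_le
      (Finset.single_le_sum (f := fun x1 => K x x1 * V3 x x1 z) (fun i _ => hKV30 x i z)
        (Finset.mem_univ x1))
  have hTpos : ∀ x x1 z, p x * (K x x1 * V x x1 z) ≠ 0 → 0 < T z := fun x x1 z hne => by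
    have h1 := (mul_nonneg (hp.1 x) (hKV0 x x1 z)).lt_of_ne' hne
    rw [hT]
    refine h1.trans_le (le_trans ?_ (Finset.single_le_sum
      (f := fun x => p x * ∑ x1, K x x1 * V x x1 z)
      (fun i _ => mul_nonneg (hp.1 i) (Finset.sum_nonneg fun j _ => hKV0 i j z))
      (Finset.mem_univ x)))
    exact mul_le_mul_of_nonneg_left (Finset.single_le_sum (f := fun x1 => K x x1 * V x x1 z)
      (fun i _ => hKV0 x i z) (Finset.mem_univ x1)) (hp.1 x)
  have hT30 : ∀ x z, 0 ≤ T3 x z := fun x z => by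
    rw [hT3]; exact Finset.sum_nonneg fun _ _ => hKV30 _ _ _
  have hT0 : ∀ z, 0 ≤ T z := fun z => by
    rw [hT]
    exact Finset.sum_nonneg fun _ _ => mul_nonneg (hp.1 _) (Finset.sum_nonneg fun _ _ => hKV0 _ _ _)
  -- single-letter information quantities on the marginal laws
  have hmap3 : ∀ F : S1 × W3 → ℝ, ∑ ω, crbcSepJoint pSrc Q pX ω * F (ω.1, ω.2.1) =
      ∑ ω : S1 × W3, P3 ω.1 ω.2 * F ω := fun F => by
    rw [sum_crbcSepJoint_source hQ hX fun a => F (a.1, a.2.1), Fintype.sum_prod_type]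
    simp only [hP3, Finset.sum_mul]
  have hmap : ∀ F : S1 × W → ℝ, ∑ ω, crbcSepJoint pSrc Q pX ω * F (ω.1, ω.2.2.1) =
      ∑ ω : S1 × W, P ω.1 ω.2 * F ω := fun F => by
    rw [sum_crbcSepJoint_source hQ hX fun a => F (a.1, a.2.2), Fintype.sum_prod_type]
    simp only [hP, Finset.sum_mul]
    exact Finset.sum_congr rfl fun s _ => Finset.sum_comm
  have hmapc3 : ∀ F : X3 × X1 × Y3 → ℝ, ∑ ω, crbcSepJoint pSrc Q pX ω *
      F (ω.2.2.2.2.1, ω.2.2.2.1, ω.2.2.2.2.2.1) =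
      ∑ ω : X3 × X1 × Y3, p ω.1 * K ω.1 ω.2.1 * V3 ω.1 ω.2.1 ω.2.2 * F ω := fun F => by
    rw [sum_crbcSepJoint_channel hSrc Q pX fun a => F (a.2.1, a.1, a.2.2.1), Finset.sum_comm]
    simp only [Fintype.sum_prod_type, hV3, hpK, Finset.mul_sum, Finset.sum_mul]
  have hmapc : ∀ F : X3 × X1 × Y → ℝ, ∑ ω, crbcSepJoint pSrc Q pX ω *
      F (ω.2.2.2.2.1, ω.2.2.2.1, ω.2.2.2.2.2.2) =
      ∑ ω : X3 × X1 × Y, p ω.1 * K ω.1 ω.2.1 * V ω.1 ω.2.1 ω.2.2 * F ω := fun F => by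
    rw [sum_crbcSepJoint_channel hSrc Q pX fun a => F (a.2.1, a.1, a.2.2.2), Finset.sum_comm]
    simp only [Fintype.sum_prod_type, hV, hpK, Finset.mul_sum, Finset.sum_mul]
    exact Finset.sum_congr rfl fun x _ => Finset.sum_congr rfl fun x1 _ => Finset.sum_comm
  have hrelay' : condEntropyOf (fun ω : S1 × W3 => P3 ω.1 ω.2) (fun ω => ω.1) (fun ω => ω.2) <
      -∑ ω : X3 × X1 × Y3, p ω.1 * K ω.1 ω.2.1 * V3 ω.1 ω.2.1 ω.2.2 *
        Real.log (T3 ω.1 ω.2.2 / V3 ω.1 ω.2.1 ω.2.2) := by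
    rw [← condMutualInfoOf_superposition hK hV3p hT3 hT3pos]
    simp only [condEntropyOf, condMutualInfoOf, ← entropyOf_map hmap3, ← entropyOf_map hmapc3]
    exact hrelay
  have hdest' : condEntropyOf (fun ω : S1 × W => P ω.1 ω.2) (fun ω => ω.1) (fun ω => ω.2) <
      -∑ ω : X3 × X1 × Y, p ω.1 * K ω.1 ω.2.1 * V ω.1 ω.2.1 ω.2.2 *
        Real.log (T ω.2.2 / V ω.1 ω.2.1 ω.2.2) := by
    rw [← mutualInfoOf_superposition hVp hT hTpos]
    simp only [condEntropyOf, mutualInfoOf, ← entropyOf_map hmap, ← entropyOf_map hmapc]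
    exact hdest
  obtain ⟨B, hB0, hB3, hB⟩ := exists_nat_mul_lt hrelay' hdest'
  obtain ⟨γ3, t3, ht3, hlim3⟩ := exists_superposition_exponent hP30 hP31 hR3 hp hK hV3p hT30
    (fun x x1 z hne => hT3pos x x1 z (right_ne_zero_of_mul (by rwa [mul_assoc] at hne))) hB3
  obtain ⟨γ, t, ht, hlim⟩ := exists_superposition_exponent (T := fun _ => T) hP0 hP1 hR hp hK hVp
    (fun _ => hT0) (fun x x1 z hne => hTpos x x1 z (by rwa [mul_assoc] at hne)) hB
  intro ε hε
  have hlim' := (hlim3.add hlim).const_mul (B : ℝ)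
  rw [add_zero, mul_zero] at hlim'
  obtain ⟨m, hm, hm0⟩ := ((hlim'.eventually_lt_const hε).and
    (Filter.eventually_gt_atTop 0)).exists
  obtain ⟨f1, f3, g3, g, hc, hle⟩ := exists_superposition_code hSrc hQ hp hK hP3 hP hR3 hR
    hV3 hV hT3 hT (n := (B + 1) * (B * m)) (B := B) (Ns := (B + 1) * m) (Nc := B * m)
    (finProdFinEquiv.trans (finCongr (by ring))) finProdFinEquiv
    (fun b j b' j' hb => by
      rw [Fin.lt_def, finProdFinEquiv_apply_val, finProdFinEquiv_apply_val]
      have h1 : (b : ℕ) + 1 ≤ b' := hb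
      have h2 := Nat.mul_le_mul_left (B * m) h1
      have h3 := j.isLt
      rw [mul_add, mul_one] at h2
      change (j : ℕ) + B * m * b < j' + B * m * b'
      omega)
    (Real.exp_pos (γ3 * m)) (Real.exp_pos (γ * m)) ht3.le ht.le
  exact ⟨(B + 1) * (B * m), by positivity, f1, f3, g3, g, hc, hle.trans hm.le⟩
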